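/- Let 1 < p_0 ≤ q_0 < ∞ and assume sup_{j≥0} 2^{jd/q_0} ‖𝒜_j‖_{L^{p_0}→L^{q_0}(L^{p_0})} ≤ C_0 < ∞. Let q_0 < q < ∞ and define ρ_min(q) and ρ_max(q) by 1/ρ_min(q) = 1 − (q_0/q)(1 − 1/p_0) and 1/ρ_max(q) = (q_0/q)(1/p_0). Assume ρ_min(q) < p ≤ q, and that r ≤ p if ρ_min(q) < p < ρ_max(q), while r < ρ_max(q) if ρ_max(q) ≤ p ≤ q. Then there is a constant C(p,q) such that for every sequence {f_j}_{j≥0}, ‖ Σ_{j≥0} ‖𝒜_j f_j‖_{L^r(ℝ)} ‖_{L^q(ℝ^d)} ≤ C(p,q)(1 + C_0) (Σ_{j≥0} 2^{−jd} ‖f_j‖_{L^p}^q)^{1/q}. -/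

import Mathlib

open MeasureTheory Metric Set
open scoped ENNReal NNReal FourierTransform

noncomputable section

/-- Euclidean `d`-space. -/
abbrev Euc (d : ℕ) : Type := EuclideanSpace ℝ (Fin d)

/-- The normalized surface measure `σ` on the unit sphere `S^{d-1} ⊆ ℝ^d`. -/
def sphereMeasure (d : ℕ) : Measure (Euc d) :=
  (((volume : Measure (Euc d)).toSphere Set.univ)⁻¹ : ℝ≥0∞) •
    ((volume : Measure (Euc d)).toSphere.map Subtype.val)

/-- The spherical average `A_t f(x) = ∫_{S^{d-1}} f(x - t y) dσ(y)`. -/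
def sphAvg {d : ℕ} (f : Euc d → ℂ) (t : ℝ) (x : Euc d) : ℂ :=
  ∫ y, f (x - t • y) ∂(sphereMeasure d)

/-- The dyadic symbols `β_j` built from the bump `β₀`:
`β_j(s) = β₀(2^{-j} s) - β₀(2^{1-j} s)` for `j ≥ 1`. -/
def betaJ (β₀ : ℝ → ℝ) : ℕ → ℝ → ℝ
  | 0 => β₀
  | (j + 1) => fun s => β₀ ((2 : ℝ) ^ (-(j + 1 : ℤ)) * s) - β₀ ((2 : ℝ) ^ (-(j : ℤ)) * s)

/-- The frequency localization `L_j` with symbol `β_j(|ξ|)`. -/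
def freqLoc (d : ℕ) (β₀ : ℝ → ℝ) (j : ℕ) (f : Euc d → ℂ) : Euc d → ℂ :=
  𝓕⁻ (fun ξ => (betaJ β₀ j ‖ξ‖ : ℂ) * 𝓕 f ξ)

/-- `χ` is an admissible time cutoff: smooth, `χ = 1` on a neighborhood of `[1,2]`,
supported in `[1/2,4]`. -/
def IsCutoff (χ : ℝ → ℝ) : Prop :=
  ContDiff ℝ (⊤ : ℕ∞) χ ∧ (∃ U : Set ℝ, IsOpen U ∧ Set.Icc 1 2 ⊆ U ∧ Set.EqOn χ 1 U) ∧
    Function.support χ ⊆ Set.Icc (1 / 2 : ℝ) 4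

/-- `β₀` is an admissible frequency bump: smooth, `β₀(s) = 1` for `|s| < 1/2` and
`β₀(s) = 0` for `|s| > 1`. -/
def IsBump (β₀ : ℝ → ℝ) : Prop :=
  ContDiff ℝ (⊤ : ℕ∞) β₀ ∧ (∀ s : ℝ, |s| < 1 / 2 → β₀ s = 1) ∧ ∀ s : ℝ, 1 < |s| → β₀ s = 0

/-- The frequency-localized operator `𝒜_j f(x,t) = χ(t) A_t L_j f(x)`. -/
def Aj (d : ℕ) (χ β₀ : ℝ → ℝ) (j : ℕ) (f : Euc d → ℂ) (x : Euc d) (t : ℝ) : ℂ :=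
  (χ t : ℂ) * sphAvg (freqLoc d β₀ j f) t x

/-- `L^q` norm (with respect to `μ`) of an `ℝ≥0∞`-valued function, `1 ≤ q ≤ ∞`. -/
def lqNorm {α : Type*} [MeasurableSpace α] (q : ℝ≥0∞) (g : α → ℝ≥0∞)
    (μ : Measure α) : ℝ≥0∞ :=
  if q = ∞ then essSup g μ else (∫⁻ x, g x ^ q.toReal ∂μ) ^ (1 / q.toReal)

/-- The mixed norm `‖F‖_{L^q(L^r)}` of `F : ℝ^d × ℝ → ℂ`. -/
def mixedNorm (d : ℕ) (q r : ℝ≥0∞) (F : Euc d → ℝ → ℂ) : ℝ≥0∞ :=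
  lqNorm q (fun x => lqNorm r (fun t => (‖F x t‖₊ : ℝ≥0∞)) volume) volume

/-- The operator norm `‖𝒜_j‖_{L^p → L^q(L^r)}`. -/
def AjOpNorm (d : ℕ) (χ β₀ : ℝ → ℝ) (j : ℕ) (p q r : ℝ≥0∞) : ℝ≥0∞ :=
  ⨆ (f : Euc d → ℂ) (_ : eLpNorm f p volume ≤ 1), mixedNorm d q r (Aj d χ β₀ j f)

section

lemma ms_pigeon_real (a b lam : ℝ) (hb : 0 < b) (hab : b < a) (hlam : 1 < lam) :
    ∃ K : ℝ, 0 < K ∧ ∀ (c D : ℕ → ℝ), (∀ n, 0 ≤ c n) →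
      (∀ n, ∑ i ∈ Finset.range (n + 1), c i ≤ D n) → (∀ n, lam * D n ≤ D (n + 1)) →
      ∀ N, 0 < ∑ i ∈ Finset.range N, c i → ∃ n < N,
        (∑ i ∈ Finset.range N, c i) ^ a ≤ K * (c n ^ b * D n ^ (a - b)) := by
  set μ : ℝ := lam ^ ((a - b) / b) with hμ
  have hμ1 : 1 < μ := Real.one_lt_rpow hlam (div_pos (by linarith) hb)
  have hμ0 : 0 < μ := by linarith
  have hinv1 : μ⁻¹ < 1 := inv_lt_one_of_one_lt₀ hμ1
  have hinv0 : 0 < μ⁻¹ := inv_pos.2 hμ0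
  set η : ℝ := (1 - μ⁻¹) / 4 with hη
  have hη0 : 0 < η := by rw [hη]; linarith
  refine ⟨(η ^ b)⁻¹ * 2 ^ (a - b), by positivity, ?_⟩
  intro c D hc hcD hD N hS
  set S := ∑ i ∈ Finset.range N, c i with hSdef
  have hex : ∃ n, S ≤ 2 * D n := by
    refine ⟨N, ?_⟩
    have h1 := hcD N
    have h2 : S ≤ ∑ i ∈ Finset.range (N + 1), c i := by
      rw [Finset.sum_range_succ]; linarith [hc N]
    linarith
  classical
  set n0 := Nat.find hex with hn0
  have hn0s : S ≤ 2 * D n0 := Nat.find_spec hex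
  have hDgrow : ∀ m, lam ^ m * D n0 ≤ D (n0 + m) := by
    intro m
    induction m with
    | zero => simp
    | succ m ih =>
      calc lam ^ (m + 1) * D n0 = lam * (lam ^ m * D n0) := by ring
        _ ≤ lam * D (n0 + m) := by gcongr
        _ ≤ _ := hD _
  have hhead : ∑ i ∈ Finset.range n0, c i ≤ S / 2 := by
    rcases Nat.eq_zero_or_pos n0 with h | h
    · rw [h]; simp; linarith
    · have h1 := Nat.find_min hex (m := n0 - 1) (by omega)
      have h2 := hcD (n0 - 1)
      rw [Nat.sub_add_cancel h] at h2
      push Not at h1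
      linarith
  have hmain : ∃ n, n0 ≤ n ∧ n < N ∧ η * S * (μ⁻¹) ^ (n - n0) ≤ c n := by
    by_contra hcon
    push Not at hcon
    have htail : ∑ i ∈ Finset.Ico n0 N, c i ≤ S / 4 := by
      calc ∑ i ∈ Finset.Ico n0 N, c i ≤ ∑ i ∈ Finset.Ico n0 N, η * S * (μ⁻¹) ^ (i - n0) := by
            apply Finset.sum_le_sum
            intro i hi
            rw [Finset.mem_Ico] at hi
            exact (hcon i hi.1 hi.2).le
        _ = η * S * ∑ i ∈ Finset.range (N - n0), (μ⁻¹) ^ i := by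
            rw [Finset.sum_Ico_eq_sum_range]
            simp only [Nat.add_sub_cancel_left]
            rw [← Finset.mul_sum]
        _ ≤ η * S * (1 - μ⁻¹)⁻¹ := by
            gcongr
            rw [← tsum_geometric_of_lt_one hinv0.le hinv1]
            exact (summable_geometric_of_lt_one hinv0.le hinv1).sum_le_tsum _ (fun i _ => by positivity)
        _ = S / 4 := by
            have : (1 - μ⁻¹) ≠ 0 := by linarith
            rw [hη, show (1 - μ⁻¹) / 4 * S * (1 - μ⁻¹)⁻¹ = ((1 - μ⁻¹) * (1 - μ⁻¹)⁻¹) * S / 4 by ring,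
              mul_inv_cancel₀ this, one_mul]
    have : S ≤ ∑ i ∈ Finset.range n0, c i + ∑ i ∈ Finset.Ico n0 N, c i := by
      rcases le_total n0 N with h | h
      · rw [hSdef, Finset.sum_range_add_sum_Ico _ h]
      · have h3 : S ≤ ∑ i ∈ Finset.range n0, c i :=
          Finset.sum_le_sum_of_subset_of_nonneg (Finset.range_mono h) (fun i _ _ => hc i)
        have h4 : 0 ≤ ∑ i ∈ Finset.Ico n0 N, c i := Finset.sum_nonneg (fun i _ => hc i)
        linarith
    linarith
  obtain ⟨n, hn1, hn2, hn3⟩ := hmain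
  refine ⟨n, hn2, ?_⟩
  obtain ⟨m, rfl⟩ := Nat.exists_eq_add_of_le hn1
  rw [Nat.add_sub_cancel_left] at hn3
  have hDl : lam ^ m * (S / 2) ≤ D (n0 + m) := by
    refine le_trans ?_ (hDgrow m)
    gcongr; linarith
  have hkey : (μ⁻¹ ^ m) ^ b * (lam ^ m) ^ (a - b) = 1 := by
    have : μ ^ b = lam ^ (a - b) := by
      rw [hμ, ← Real.rpow_mul (by linarith)]; congr 1; field_simp
    rw [← Real.rpow_natCast lam m, ← Real.rpow_natCast μ⁻¹ m, ← Real.rpow_mul (by linarith),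
      ← Real.rpow_mul (by linarith), mul_comm (m:ℝ) b, mul_comm (m:ℝ) (a-b), Real.rpow_mul (by linarith),
      Real.rpow_mul (by linarith), Real.inv_rpow hμ0.le, this,
      ← Real.mul_rpow (by positivity) (by positivity), inv_mul_cancel₀ (by positivity), Real.one_rpow]
  calc S ^ a = (η ^ b)⁻¹ * 2 ^ (a - b) * ((η * S * (μ⁻¹) ^ m) ^ b * (lam ^ m * (S / 2)) ^ (a - b)) := by
        rw [Real.mul_rpow (by positivity) (by positivity), Real.mul_rpow (by positivity) (by positivity),
          Real.mul_rpow (x := lam ^ m) (by positivity) (by positivity), Real.div_rpow hS.le (by norm_num)]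
        have e1 : S ^ a = S ^ b * S ^ (a - b) := by rw [← Real.rpow_add hS]; congr 1; ring
        rw [e1]
        have : (2:ℝ) ^ (a - b) ≠ 0 := by positivity
        have : η ^ b ≠ 0 := by positivity
        calc S ^ b * S ^ (a - b) = S ^ b * S ^ (a - b) * ((μ⁻¹ ^ m) ^ b * (lam ^ m) ^ (a - b)) := by
              rw [hkey, mul_one]
          _ = _ := by field_simp
    _ ≤ _ := by
        have := Real.rpow_nonneg (hc (n0 + m)) b
        gcongr

lemma ms_pigeon (a b lam : ℝ) (hb : 0 < b) (hab : b < a) (hlam : 1 < lam) :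
    ∃ K : ℝ≥0, ∀ (c D : ℕ → ℝ≥0∞),
      (∀ n, ∑ i ∈ Finset.range (n + 1), c i ≤ D n) → (∀ n, ENNReal.ofReal lam * D n ≤ D (n + 1)) →
      (∀ n, D n ≠ ∞) →
        (∑' i, c i) ^ a ≤ K * ∑' n, (c n ^ b * D n ^ (a - b)) := by
  obtain ⟨K, hK, h⟩ := ms_pigeon_real a b lam hb hab hlam
  lift K to ℝ≥0 using hK.le
  refine ⟨K, ?_⟩
  intro c D hcD hD hfin
  have hc : ∀ n, c n ≠ ∞ := fun n => ne_top_of_le_ne_top (hfin n)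
    (le_trans (Finset.single_le_sum (f := c) (fun i _ => zero_le) (Finset.self_mem_range_succ n)) (hcD n))
  lift c to ℕ → ℝ≥0 using hc
  lift D to ℕ → ℝ≥0 using hfin
  have ha : 0 < a := by linarith
  rw [← ENNReal.le_rpow_inv_iff ha]
  refine ENNReal.tsum_le_of_sum_range_le (fun N => ?_)
  rw [ENNReal.le_rpow_inv_iff ha]
  by_cases hS : ∑ i ∈ Finset.range N, c i = 0
  · have : ∑ i ∈ Finset.range N, (c i : ℝ≥0∞) = 0 := by exact_mod_cast hS
    rw [this, ENNReal.zero_rpow_of_pos ha]; exact zero_le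
  obtain ⟨n, hn, hle⟩ := h (fun n => c n) (fun n => D n) (fun n => NNReal.coe_nonneg _)
    (fun n => by
      have := hcD n
      dsimp only at this
      exact_mod_cast this) (fun n => by
      have := hD n
      rw [ENNReal.ofReal, ← ENNReal.coe_mul, ENNReal.coe_le_coe] at this
      have h2 : ((lam.toNNReal * D n : ℝ≥0) : ℝ) ≤ D (n+1) := by exact_mod_cast this
      rwa [NNReal.coe_mul, Real.coe_toNNReal _ (by linarith)] at h2) N (by
      have : 0 < ∑ i ∈ Finset.range N, c i := pos_iff_ne_zero.2 hS
      exact_mod_cast this)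
  have hle2 : (∑ i ∈ Finset.range N, c i) ^ a ≤ K * (c n ^ b * D n ^ (a - b)) := by
    rw [← NNReal.coe_le_coe]; push_cast; exact hle
  calc (∑ i ∈ Finset.range N, (c i : ℝ≥0∞)) ^ a = (((∑ i ∈ Finset.range N, c i) ^ a : ℝ≥0) : ℝ≥0∞) := by
        rw [ENNReal.coe_rpow_of_nonneg _ ha.le]; push_cast; rfl
    _ ≤ ((K * (c n ^ b * D n ^ (a - b)) : ℝ≥0) : ℝ≥0∞) := by exact_mod_cast hle2
    _ = (K : ℝ≥0∞) * ((c n : ℝ≥0∞) ^ b * (D n : ℝ≥0∞) ^ (a - b)) := by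
        rw [ENNReal.coe_mul, ENNReal.coe_mul, ENNReal.coe_rpow_of_nonneg _ hb.le,
          ENNReal.coe_rpow_of_nonneg _ (by linarith)]
    _ ≤ _ := by gcongr; exact ENNReal.le_tsum (f := fun n => (c n : ℝ≥0∞) ^ b * (D n : ℝ≥0∞) ^ (a - b)) n

/-- weighted Jensen -/
lemma ms_jensen {α : Type*} [MeasurableSpace α] {μ : Measure α} {q : ℝ} (hq : 1 ≤ q)
    {a h : α → ℝ≥0∞} (ha : AEMeasurable a μ) (hh : AEMeasurable h μ) :
    (∫⁻ x, a x * h x ∂μ) ^ q ≤ (∫⁻ x, a x ∂μ) ^ (q - 1) * ∫⁻ x, a x * h x ^ q ∂μ := by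
  have hq0 : 0 < q := by linarith
  have hi : 0 ≤ 1 - 1 / q := by rw [sub_nonneg, div_le_one hq0]; exact hq
  have h1 := ENNReal.lintegral_mul_norm_pow_le (μ := μ) (f := fun x => a x * h x ^ q) (g := a)
    (ha.mul (hh.pow_const q)) ha (p := 1 / q) (q := 1 - 1 / q) (by positivity) hi (by ring)
  have h2 : ∀ x, (a x * h x ^ q) ^ (1 / q) * a x ^ (1 - 1 / q) = a x * h x := by
    intro x
    rw [ENNReal.mul_rpow_of_nonneg _ _ (by positivity), ← ENNReal.rpow_mul, mul_one_div_cancel hq0.ne',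
      ENNReal.rpow_one, mul_right_comm, ← ENNReal.rpow_add_of_nonneg _ _ (by positivity) hi]
    simp
  simp_rw [h2] at h1
  calc _ ≤ ((∫⁻ x, a x * h x ^ q ∂μ) ^ (1 / q) * (∫⁻ x, a x ∂μ) ^ (1 - 1 / q)) ^ q := by gcongr
    _ = _ := by
      rw [ENNReal.mul_rpow_of_nonneg _ _ hq0.le, ← ENNReal.rpow_mul, ← ENNReal.rpow_mul,
        one_div_mul_cancel hq0.ne', ENNReal.rpow_one, mul_comm]
      congr 2; field_simp

lemma ms_jensen_tsum {q : ℝ} (hq : 1 ≤ q) (a h : ℕ → ℝ≥0∞) :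
    (∑' n, a n * h n) ^ q ≤ (∑' n, a n) ^ (q - 1) * ∑' n, a n * h n ^ q := by
  have := ms_jensen (μ := Measure.count) hq (a := a) (h := h) (by fun_prop) (by fun_prop)
  simpa [lintegral_count] using this

lemma ms_minkowski {α ι : Type*} [Countable ι] [MeasurableSpace α] {μ : Measure α} {κ : ℝ} (hκ : 1 ≤ κ)
    {G : ι → α → ℝ≥0∞} (hG : ∀ k, Measurable (G k)) :
    (∫⁻ x, (∑' k, G k x) ^ κ ∂μ) ^ (1 / κ) ≤ ∑' k, (∫⁻ x, G k x ^ κ ∂μ) ^ (1 / κ) := by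
  have hκ0 : 0 < κ := by linarith
  have hfin : ∀ s : Finset ι, (∫⁻ x, (∑ k ∈ s, G k x) ^ κ ∂μ) ^ (1 / κ)
      ≤ ∑ k ∈ s, (∫⁻ x, G k x ^ κ ∂μ) ^ (1 / κ) := by
    classical
    intro s
    induction s using Finset.induction_on with
    | empty => simp [ENNReal.zero_rpow_of_pos hκ0, hκ0]
    | insert i s hi ih =>
      simp_rw [Finset.sum_insert hi]
      refine (ENNReal.lintegral_Lp_add_le (f := G i) (g := fun x => ∑ k ∈ s, G k x) (hG i).aemeasurable
        (Finset.measurable_fun_sum s (fun k _ => hG k)).aemeasurable hκ).trans ?_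
      gcongr
  have h1 : ∀ x, (∑' k, G k x) ^ κ = ⨆ s : Finset ι, (∑ k ∈ s, G k x) ^ κ := by
    intro x
    rw [ENNReal.tsum_eq_iSup_sum]
    exact (ENNReal.orderIsoRpow κ hκ0).map_iSup _
  simp_rw [h1]
  rw [lintegral_iSup_directed (fun s => ((Finset.measurable_fun_sum s (fun k _ => hG k)).pow_const κ).aemeasurable)]
  · rw [one_div, ENNReal.rpow_inv_le_iff hκ0]
    refine iSup_le fun s => ?_
    rw [← ENNReal.rpow_inv_le_iff hκ0, ← one_div]
    refine (hfin s).trans (ENNReal.sum_le_tsum _)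
  · intro s t
    classical
    refine ⟨s ∪ t, fun x => ?_, fun x => ?_⟩
    · dsimp only; gcongr; exact Finset.subset_union_left
    · dsimp only; gcongr; exact Finset.subset_union_right

end

section

lemma ms_two_add (x y : ℝ) : (2 : ℝ≥0∞) ^ (x + y) = 2 ^ x * 2 ^ y :=
  ENNReal.rpow_add _ _ (by norm_num) (by norm_num)

lemma ms_two_ne_top (x : ℝ) : (2 : ℝ≥0∞) ^ x ≠ ∞ := by
  simp [ENNReal.rpow_eq_top_iff]

lemma ms_pigeon_int (a b : ℝ) (hb : 0 < b) (hab : b < a) (A : ℝ≥0) :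
    ∃ K : ℝ≥0, ∀ (c : ℤ → ℝ≥0∞), (∀ k : ℤ, c k ≤ A * 2 ^ ((k : ℝ) + 1)) →
        (∑' i, c i) ^ a ≤ K * ∑' k : ℤ, (c k ^ b * 2 ^ ((k : ℝ) * (a - b))) := by
  obtain ⟨K, hK⟩ := ms_pigeon a b 2 hb hab (by norm_num)
  have h2 : 0 ≤ a - b := by linarith
  refine ⟨K * (4 * A) ^ (a - b), ?_⟩
  intro c hc
  have ha : 0 < a := by linarith
  rw [← ENNReal.le_rpow_inv_iff ha]
  rw [ENNReal.tsum_eq_iSup_sum]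
  refine iSup_le fun s => ?_
  rw [ENNReal.le_rpow_inv_iff ha]
  obtain ⟨M, hM⟩ : ∃ M : ℕ, ∀ k ∈ s, -(M : ℤ) ≤ k := by
    obtain ⟨l, hl⟩ := s.bddBelow
    refine ⟨l.natAbs, fun k hk => ?_⟩
    have := hl hk
    omega
  have hinj : Function.Injective (fun n : ℕ => (n : ℤ) - M) := fun x y h => by
    simpa using h
  have hle : ∑ k ∈ s, c k ≤ ∑' n : ℕ, c ((n : ℤ) - M) := by
    classical
    have : ∑ k ∈ s, c k = ∑ n ∈ s.image (fun k : ℤ => (k + M).toNat), c ((n : ℤ) - M) := by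
      rw [Finset.sum_image]
      · apply Finset.sum_congr rfl
        intro k hk
        have := hM k hk
        congr 1
        omega
      · intro x hx y hy h
        have := hM x hx
        have := hM y hy
        dsimp only at h
        omega
    rw [this]
    exact ENNReal.sum_le_tsum _
  have hP := hK (fun n => c ((n : ℤ) - M)) (fun n => A * 2 ^ ((n : ℝ) - M + 2)) (fun n => by
      induction n with
      | zero =>
        simp only [zero_add, Finset.range_one, Finset.sum_singleton]
        refine (hc _).trans ?_
        refine mul_le_mul_right (ENNReal.rpow_le_rpow_of_exponent_le (by norm_num) ?_) _
        push_cast; linarith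
      | succ n ih =>
        rw [Finset.sum_range_succ]
        have e : (2 : ℝ≥0∞) ^ (((n + 1 : ℕ) : ℝ) - M + 2) = 2 ^ ((n : ℝ) - M + 2) + 2 ^ ((n : ℝ) - M + 2) := by
          rw [show (((n + 1 : ℕ) : ℝ) - M + 2) = ((n : ℝ) - M + 2) + 1 by push_cast; ring, ms_two_add,
            ENNReal.rpow_one, mul_two]
        rw [e, mul_add]
        gcongr
        refine (hc _).trans ?_
        refine mul_le_mul_right (ENNReal.rpow_le_rpow_of_exponent_le (by norm_num) ?_) _
        push_cast; linarith)
    (fun n => by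
      have : ENNReal.ofReal 2 = 2 := by simp
      rw [this, show (((n + 1 : ℕ) : ℝ) - M + 2) = 1 + ((n : ℝ) - M + 2) by push_cast; ring, ms_two_add 1,
            ENNReal.rpow_one]
      rw [mul_left_comm])
    (fun n => ENNReal.mul_ne_top ENNReal.coe_ne_top (ms_two_ne_top _))
  calc (∑ k ∈ s, c k) ^ a ≤ (∑' n : ℕ, c ((n : ℤ) - M)) ^ a := by gcongr
    _ ≤ _ := hP
    _ = (K * (4 * A) ^ (a - b) : ℝ≥0) * ∑' n : ℕ, (c ((n : ℤ) - M) ^ b * 2 ^ ((((n : ℤ) - M : ℤ) : ℝ) * (a - b))) := by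
      rw [← ENNReal.tsum_mul_left, ← ENNReal.tsum_mul_left]
      refine tsum_congr fun n => ?_
      rw [ENNReal.coe_mul, ENNReal.mul_rpow_of_nonneg _ _ h2, ENNReal.coe_rpow_of_nonneg _ h2, ENNReal.coe_mul,
        ENNReal.mul_rpow_of_nonneg _ _ h2, ms_two_add, ENNReal.mul_rpow_of_nonneg _ _ h2, ← ENNReal.rpow_mul]
      have : (2 : ℝ≥0∞) ^ (2 : ℝ) = 4 := by
        rw [show (2 : ℝ) = ((2 : ℕ) : ℝ) by norm_num, ENNReal.rpow_natCast]; norm_num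
      rw [this]
      push_cast
      ring
    _ ≤ _ := by
      gcongr
      exact ENNReal.tsum_comp_le_tsum_of_injective hinj (fun k : ℤ => c k ^ b * 2 ^ ((k : ℝ) * (a - b)))

variable {E : Type*} [MeasurableSpace E]

/-- operator with kernel m -/
def msOp (μ : Measure E) (m : E → ℝ → E → ℂ) (f : E → ℂ) (x : E) (t : ℝ) : ℂ := ∫ w, m x t w * f w ∂μ

structure MsGood (μ : Measure E) (A : ℝ≥0) (m : E → ℝ → E → ℂ) : Prop where
  meas : Measurable (fun z : (E × ℝ) × E => m z.1.1 z.1.2 z.2)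
  bdd : ∃ M : ℝ, ∀ x t w, ‖m x t w‖ ≤ M
  h3 : ∀ x t, ∫⁻ w, ‖m x t w‖ₑ ∂μ ≤ A
  h4 : ∀ x w, ∫⁻ t, ‖m x t w‖ₑ ≤ A

/-- level set -/
def msLev (f : E → ℂ) (k : ℤ) : Set E := {w | (2 : ℝ) ^ k ≤ ‖f w‖ ∧ ‖f w‖ < (2 : ℝ) ^ (k + 1)}

/-- level piece -/
def msPiece (f : E → ℂ) (k : ℤ) : E → ℂ := (msLev f k).indicator f

lemma msLev_meas {f : E → ℂ} (hf : Measurable f) (k : ℤ) : MeasurableSet (msLev f k) :=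
  (measurableSet_le measurable_const hf.norm).inter (measurableSet_lt hf.norm measurable_const)

lemma msPiece_meas {f : E → ℂ} (hf : Measurable f) (k : ℤ) : Measurable (msPiece f k) :=
  hf.indicator (msLev_meas hf k)

lemma msLev_unique {f : E → ℂ} {k l : ℤ} {w : E} (hk : w ∈ msLev f k) (hl : w ∈ msLev f l) : k = l := by
  have h1 : (2 : ℝ) ^ k < 2 ^ (l + 1) := hk.1.trans_lt hl.2
  have h2 : (2 : ℝ) ^ l < 2 ^ (k + 1) := hl.1.trans_lt hk.2
  rw [zpow_lt_zpow_iff_right₀ (by norm_num)] at h1 h2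
  omega

lemma msPiece_hasSum (f : E → ℂ) (w : E) : HasSum (fun k => msPiece f k w) (f w) := by
  by_cases h0 : f w = 0
  · have : ∀ k, msPiece f k w = 0 := fun k => by
      simp [msPiece, Set.indicator_apply, h0]
    simp_rw [this, h0]; exact hasSum_zero
  · obtain ⟨n, hn⟩ := exists_mem_Ico_zpow (norm_pos_iff.2 h0) (one_lt_two)
    have hmem : w ∈ msLev f n := ⟨hn.1, hn.2⟩
    have h1 : f w = msPiece f n w := by rw [msPiece, Set.indicator_of_mem hmem]
    rw [h1]
    apply hasSum_single
    intro k hk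
    rw [msPiece, Set.indicator_of_notMem]
    intro h
    exact hk (msLev_unique h hmem)

lemma msPiece_sum_enorm (f : E → ℂ) (w : E) : ∑' k, ‖msPiece f k w‖ₑ ≤ ‖f w‖ₑ := by
  by_cases h0 : f w = 0
  · have : ∀ k, msPiece f k w = 0 := fun k => by
      simp [msPiece, Set.indicator_apply, h0]
    simp_rw [this]; simp
  · obtain ⟨n, hn⟩ := exists_mem_Ico_zpow (norm_pos_iff.2 h0) (one_lt_two)
    have hmem : w ∈ msLev f n := ⟨hn.1, hn.2⟩
    rw [tsum_eq_single n]
    · rw [msPiece, Set.indicator_of_mem hmem]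
    · intro k hk
      rw [msPiece, Set.indicator_of_notMem]
      · simp
      intro h
      exact hk (msLev_unique h hmem)

lemma msOp_le_lintegral (μ : Measure E) (m : E → ℝ → E → ℂ) (f : E → ℂ) (x : E) (t : ℝ) :
    ‖msOp μ m f x t‖ₑ ≤ ∫⁻ w, ‖m x t w‖ₑ * ‖f w‖ₑ ∂μ := by
  refine (enorm_integral_le_lintegral_enorm _).trans_eq ?_
  simp_rw [enorm_mul]

section
variable {μ : Measure E} [SFinite μ] {A : ℝ≥0} {m : E → ℝ → E → ℂ}

lemma MsGood.meas_w (hm : MsGood μ A m) (x : E) (t : ℝ) : Measurable (m x t) :=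
  hm.meas.comp (measurable_prodMk_left (x := (x, t)))

lemma MsGood.integrable (hm : MsGood μ A m) {f : E → ℂ} (hf : Integrable f μ) (x : E) (t : ℝ) :
    Integrable (fun w => m x t w * f w) μ := by
  obtain ⟨M, hM⟩ := hm.bdd
  exact hf.bdd_mul (c := M) (hm.meas_w x t).aestronglyMeasurable
    (Filter.Eventually.of_forall (hM x t))

lemma MsGood.op_meas (hm : MsGood μ A m) {f : E → ℂ} (hf : Measurable f) :
    Measurable (fun z : E × ℝ => msOp μ m f z.1 z.2) := by
  have : StronglyMeasurable (fun z : (E × ℝ) × E => m z.1.1 z.1.2 z.2 * f z.2) :=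
    (hm.meas.mul (hf.comp measurable_snd)).stronglyMeasurable
  exact this.integral_prod_right'.measurable

lemma MsGood.op_add (hm : MsGood μ A m) {f g : E → ℂ} (hf : Integrable f μ) (hg : Integrable g μ)
    (x : E) (t : ℝ) : msOp μ m (f + g) x t = msOp μ m f x t + msOp μ m g x t := by
  unfold msOp
  rw [← integral_add (hm.integrable hf x t) (hm.integrable hg x t)]
  congr 1; ext w; simp [mul_add]

lemma MsGood.op_sup (hm : MsGood μ A m) {f : E → ℂ} {M : ℝ≥0∞} (hf : ∀ w, ‖f w‖ₑ ≤ M)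
    (x : E) (t : ℝ) : ‖msOp μ m f x t‖ₑ ≤ A * M := by
  refine (msOp_le_lintegral μ m f x t).trans ?_
  calc _ ≤ ∫⁻ w, ‖m x t w‖ₑ * M ∂μ := by gcongr; exact hf _
    _ = (∫⁻ w, ‖m x t w‖ₑ ∂μ) * M := by
      rw [lintegral_mul_const]
      exact (hm.meas_w x t).enorm
    _ ≤ _ := by gcongr; exact hm.h3 x t

lemma MsGood.op_one (hm : MsGood μ A m) {f : E → ℂ} (hf : Measurable f)
    (x : E) : ∫⁻ t, ‖msOp μ m f x t‖ₑ ≤ A * ∫⁻ w, ‖f w‖ₑ ∂μ := by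
  have hmx : Measurable (fun z : ℝ × E => ‖m x z.1 z.2‖ₑ) :=
    (hm.meas.comp (((measurable_const (a := x)).prodMk measurable_fst).prodMk measurable_snd)).enorm
  calc _ ≤ ∫⁻ t, ∫⁻ w, ‖m x t w‖ₑ * ‖f w‖ₑ ∂μ := by
        gcongr with t; exact msOp_le_lintegral μ m f x t
    _ = ∫⁻ w, (∫⁻ t, ‖m x t w‖ₑ * ‖f w‖ₑ) ∂μ := by
        rw [lintegral_lintegral_swap]
        exact (hmx.mul (hf.enorm.comp measurable_snd)).aemeasurable
    _ = ∫⁻ w, (∫⁻ t, ‖m x t w‖ₑ) * ‖f w‖ₑ ∂μ := by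
        congr 1; ext w
        rw [lintegral_mul_const]
        exact hmx.comp measurable_prodMk_right
    _ ≤ ∫⁻ w, A * ‖f w‖ₑ ∂μ := by gcongr with w; exact hm.h4 x w
    _ = _ := by rw [lintegral_const_mul _ hf.enorm]

lemma msPiece_integrable {f : E → ℂ} (hf : Integrable f μ) (hfm : Measurable f) (k : ℤ) :
    Integrable (msPiece f k) μ := hf.indicator (msLev_meas hfm k)

lemma MsGood.op_tsum (hm : MsGood μ A m) {f : E → ℂ} (hf : Integrable f μ) (hfm : Measurable f)
    (x : E) (t : ℝ) : ‖msOp μ m f x t‖ₑ ≤ ∑' k, ‖msOp μ m (msPiece f k) x t‖ₑ := by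
  obtain ⟨M, hM⟩ := hm.bdd
  have hM0 : 0 ≤ M := (norm_nonneg _).trans (hM x t x)
  have h1 : ∑' k, ∫⁻ w, ‖m x t w * msPiece f k w‖ₑ ∂μ ≠ ∞ := by
    rw [← lintegral_tsum]
    · refine ne_top_of_le_ne_top (b := ∫⁻ w, ENNReal.ofReal M * ‖f w‖ₑ ∂μ) ?_ ?_
      · rw [lintegral_const_mul _ hfm.enorm]
        exact ENNReal.mul_ne_top ENNReal.ofReal_ne_top hf.2.ne
      · apply lintegral_mono
        intro w
        simp_rw [enorm_mul]
        rw [ENNReal.tsum_mul_left]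
        gcongr
        · rw [← ofReal_norm]; exact ENNReal.ofReal_le_ofReal (hM x t w)
        · exact msPiece_sum_enorm f w
    · intro k
      exact ((hm.meas_w x t).mul (msPiece_meas hfm k)).enorm.aemeasurable
  have h2 := hasSum_integral_of_summable_integral_norm (μ := μ) (F := fun k w => m x t w * msPiece f k w)
    (fun k => hm.integrable (msPiece_integrable hf hfm k) x t) (by
      have : ∀ k, ∫ w, ‖m x t w * msPiece f k w‖ ∂μ = (∫⁻ w, ‖m x t w * msPiece f k w‖ₑ ∂μ).toReal := by
        intro k
        rw [integral_norm_eq_lintegral_enorm]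
        exact (hm.integrable (msPiece_integrable hf hfm k) x t).1
      simp_rw [this]
      exact ENNReal.summable_toReal h1)
  have h3 : ∀ w, ∑' k, m x t w * msPiece f k w = m x t w * f w := fun w =>
    ((msPiece_hasSum f w).mul_left _).tsum_eq
  simp_rw [h3] at h2
  have h4 : msOp μ m f x t = ∑' k, msOp μ m (msPiece f k) x t := h2.tsum_eq.symm
  rw [h4]
  exact enorm_tsum_le_tsum_enorm

end

end

section

lemma ms_ofReal_zpow (k : ℤ) : ENNReal.ofReal ((2 : ℝ) ^ k) = 2 ^ (k : ℝ) := by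
  rw [← Real.rpow_intCast, ← ENNReal.ofReal_rpow_of_pos (by norm_num)]
  simp

section
variable {E : Type*} [MeasurableSpace E] {μ : Measure E} [SFinite μ] {A : ℝ≥0} {m : E → ℝ → E → ℂ}

lemma msPiece_le (f : E → ℂ) (k : ℤ) (w : E) : ‖msPiece f k w‖ₑ ≤ 2 ^ ((k : ℝ) + 1) := by
  by_cases h : w ∈ msLev f k
  · rw [msPiece, Set.indicator_of_mem h, ← ofReal_norm]
    have := ms_ofReal_zpow (k + 1)
    push_cast at this
    rw [← this]
    exact ENNReal.ofReal_le_ofReal h.2.le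
  · rw [msPiece, Set.indicator_of_notMem h]; simp

lemma msPiece_pow_lintegral {f : E → ℂ} (hf : Measurable f) (k : ℤ) {s : ℝ} (hs : 0 < s) :
    ∫⁻ w, ‖msPiece f k w‖ₑ ^ s ∂μ ≤ 2 ^ (((k : ℝ) + 1) * s) * μ (msLev f k) := by
  calc _ ≤ ∫⁻ w, (msLev f k).indicator (fun _ => (2 : ℝ≥0∞) ^ (((k : ℝ) + 1) * s)) w ∂μ := by
        apply lintegral_mono
        intro w
        dsimp only
        by_cases h : w ∈ msLev f k
        · rw [Set.indicator_of_mem h, ENNReal.rpow_mul]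
          gcongr
          exact msPiece_le f k w
        · rw [Set.indicator_of_notMem h, msPiece, Set.indicator_of_notMem h]
          simp [hs]
    _ = _ := by rw [lintegral_indicator_const (msLev_meas hf k)]

lemma msLev_sum_le {f : E → ℂ} (hf : Measurable f) {p : ℝ} (hp : 0 < p) :
    ∑' k : ℤ, 2 ^ ((k : ℝ) * p) * μ (msLev f k) ≤ ∫⁻ w, ‖f w‖ₑ ^ p ∂μ := by
  have h1 : ∀ k : ℤ, (2 : ℝ≥0∞) ^ ((k : ℝ) * p) * μ (msLev f k) =
      ∫⁻ w, (msLev f k).indicator (fun _ => (2 : ℝ≥0∞) ^ ((k : ℝ) * p)) w ∂μ := fun k => by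
    rw [lintegral_indicator_const (msLev_meas hf k)]
  simp_rw [h1]
  rw [← lintegral_tsum (fun k => (measurable_const.indicator (msLev_meas hf k)).aemeasurable)]
  apply lintegral_mono
  intro w
  dsimp only
  by_cases h : ∃ n, w ∈ msLev f n
  · obtain ⟨n, hn⟩ := h
    rw [tsum_eq_single n]
    · rw [Set.indicator_of_mem hn, ENNReal.rpow_mul, ← ms_ofReal_zpow, ← ofReal_norm]
      gcongr
      exact hn.1
    · intro k hk
      rw [Set.indicator_of_notMem]
      intro h
      exact hk (msLev_unique h hn)
  · push Not at h
    have : ∀ k : ℤ, (msLev f k).indicator (fun _ => (2 : ℝ≥0∞) ^ ((k : ℝ) * p)) w = 0 := fun k =>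
      Set.indicator_of_notMem (h k) _
    simp_rw [this]; simp

/-- pointwise Marcinkiewicz -/
lemma ms_pointwise (A : ℝ≥0) (p p1 : ℝ) (h1 : 0 < p1) (h2 : p1 < p) : ∃ K : ℝ≥0,
    ∀ (m : E → ℝ → E → ℂ), MsGood μ A m → ∀ f : E → ℂ, Measurable f → Integrable f μ → ∀ x t,
    ‖msOp μ m f x t‖ₑ ^ p ≤
      K * ∑' k : ℤ, (‖msOp μ m (msPiece f k) x t‖ₑ ^ p1 * 2 ^ ((k : ℝ) * (p - p1))) := by
  obtain ⟨K, hK⟩ := ms_pigeon_int p p1 h1 h2 A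
  refine ⟨K, fun m hm f hfm hf x t => ?_⟩
  refine le_trans ?_ (hK _ (fun k => hm.op_sup (msPiece_le f k) x t))
  have : 0 ≤ p := by linarith
  gcongr
  exact hm.op_tsum hf hfm x t

lemma MsGood.op_meas_t (hm : MsGood μ A m) {f : E → ℂ} (hf : Measurable f) (x : E) :
    Measurable (fun t => msOp μ m f x t) := (hm.op_meas hf).comp measurable_prodMk_left

lemma MsGood.op_meas_int (hm : MsGood μ A m) {f : E → ℂ} (hf : Measurable f) (s : ℝ) :
    Measurable (fun x => ∫⁻ t, ‖msOp μ m f x t‖ₑ ^ s) :=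
  ((hm.op_meas hf).enorm.pow_const s).lintegral_prod_right'

lemma ms_pointwise_int (A : ℝ≥0) (p p1 : ℝ) (h1 : 0 < p1) (h2 : p1 < p) : ∃ K : ℝ≥0,
    ∀ (m : E → ℝ → E → ℂ), MsGood μ A m → ∀ f : E → ℂ, Measurable f → Integrable f μ → ∀ x,
    ∫⁻ t, ‖msOp μ m f x t‖ₑ ^ p ≤
      K * ∑' k : ℤ, ((∫⁻ t, ‖msOp μ m (msPiece f k) x t‖ₑ ^ p1) * 2 ^ ((k : ℝ) * (p - p1))) := by
  obtain ⟨K, hK⟩ := ms_pointwise (E := E) (μ := μ) A p p1 h1 h2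
  refine ⟨K, fun m hm f hfm hf x => ?_⟩
  have hme : ∀ k, Measurable fun t => ‖msOp μ m (msPiece f k) x t‖ₑ ^ p1 * 2 ^ ((k : ℝ) * (p - p1)) :=
    fun k => ((hm.op_meas_t (msPiece_meas hfm k) x).enorm.pow_const p1).mul_const _
  calc _ ≤ ∫⁻ t, K * ∑' k : ℤ, (‖msOp μ m (msPiece f k) x t‖ₑ ^ p1 * 2 ^ ((k : ℝ) * (p - p1))) :=
        lintegral_mono (fun t => hK m hm f hfm hf x t)
    _ = _ := by
        rw [lintegral_const_mul' _ _ ENNReal.coe_ne_top, lintegral_tsum (fun k => (hme k).aemeasurable)]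
        congr 1
        refine tsum_congr fun k => ?_
        rw [lintegral_mul_const' _ _ (ms_two_ne_top _)]

lemma ms_infty (A : ℝ≥0) (p : ℝ) (hp : 1 < p) : ∃ K : ℝ≥0,
    ∀ (m : E → ℝ → E → ℂ), MsGood μ A m → ∀ f : E → ℂ, Measurable f → Integrable f μ → ∀ x,
    ∫⁻ t, ‖msOp μ m f x t‖ₑ ^ p ≤ K * ∫⁻ w, ‖f w‖ₑ ^ p ∂μ := by
  obtain ⟨K, hK⟩ := ms_pointwise_int (E := E) (μ := μ) A p 1 one_pos hp
  refine ⟨K * (2 * A), fun m hm f hfm hf x => ?_⟩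
  refine (hK m hm f hfm hf x).trans ?_
  rw [ENNReal.coe_mul, mul_assoc]
  gcongr
  calc _ ≤ ∑' k : ℤ, ((2 * A : ℝ≥0) * (2 ^ ((k : ℝ) * p) * μ (msLev f k))) := by
        refine ENNReal.tsum_le_tsum fun k => ?_
        simp_rw [ENNReal.rpow_one]
        have h1 := msPiece_pow_lintegral (μ := μ) hfm k one_pos
        simp_rw [ENNReal.rpow_one] at h1
        calc _ ≤ (A * (2 ^ (((k : ℝ) + 1) * 1) * μ (msLev f k))) * 2 ^ ((k : ℝ) * (p - 1)) := by
              gcongr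
              exact (hm.op_one (msPiece_meas hfm k) x).trans (by gcongr)
          _ = _ := by
              rw [show (k : ℝ) * p = k + k * (p - 1) by ring, ms_two_add, mul_one, ms_two_add,
                ENNReal.rpow_one]
              push_cast
              ring
    _ ≤ _ := by
        rw [ENNReal.tsum_mul_left]
        gcongr
        exact msLev_sum_le hfm (by linarith)

/-- Step A -/
lemma ms_stepA (A : ℝ≥0) (p p1 p0 q0 θ κ : ℝ) (h1 : 0 < p1) (h2 : p1 < p) (hp0 : 0 < p0) 
    (hκ : 1 ≤ κ) (hθ0 : 0 < θ) (hθ1 : θ ≤ 1)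
    (e1 : θ * p1 / p0 + (1 - θ) * p1 = 1) (e2 : κ * p1 * θ = q0) : ∃ K : ℝ≥0,
    ∀ (m : E → ℝ → E → ℂ), MsGood μ A m → ∀ B : ℝ≥0∞,
    (∀ g : E → ℂ, Measurable g → Integrable g μ →
      ∫⁻ x, (∫⁻ t, ‖msOp μ m g x t‖ₑ ^ p0) ^ (q0 / p0) ∂μ ≤ B * (∫⁻ w, ‖g w‖ₑ ^ p0 ∂μ) ^ (q0 / p0)) →
    ∀ f : E → ℂ, Measurable f → Integrable f μ →
    ∫⁻ x, (∫⁻ t, ‖msOp μ m f x t‖ₑ ^ p) ^ κ ∂μ ≤ K * B * (∫⁻ w, ‖f w‖ₑ ^ p ∂μ) ^ κ := by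
  obtain ⟨K, hK⟩ := ms_pointwise_int (E := E) (μ := μ) A p p1 h1 h2
  set s := θ * p1 / p0 with hs
  have hs0 : 0 ≤ s := by positivity
  have hs1 : 1 - s = (1 - θ) * p1 := by linarith
  have hs1' : 0 ≤ 1 - s := by rw [hs1]; exact mul_nonneg (by linarith) h1.le
  have hκ0 : 0 < κ := by linarith
  have hsκ : s * κ = q0 / p0 := by rw [hs, ← e2]; ring
  have hp0s : p0 * s = θ * p1 := by rw [hs]; field_simp
  refine ⟨(K * A ^ (1 - s) * 2 ^ p1) ^ κ, fun m hm B hB f hfm hf => ?_⟩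
  set V : ℤ → ℝ≥0∞ := fun k => μ (msLev f k) with hV
  have hpc : ∀ k : ℤ, (∫⁻ x, (∫⁻ t, ‖msOp μ m (msPiece f k) x t‖ₑ ^ p1) ^ κ ∂μ) ^ (1 / κ) ≤
      A ^ (1 - s) * B ^ (1 / κ) * 2 ^ p1 * (2 ^ ((k : ℝ) * p1) * V k) := by
    intro k
    have hgm := msPiece_meas hfm k
    have hgi := msPiece_integrable hf hfm k
    set g := msPiece f k with hg
    have hn1 : ∫⁻ w, ‖g w‖ₑ ∂μ ≤ 2 ^ ((k : ℝ) + 1) * V k := by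
      have h1 := msPiece_pow_lintegral (μ := μ) hfm k one_pos
      simp_rw [ENNReal.rpow_one, mul_one] at h1
      exact h1
    have hx : ∀ x, ∫⁻ t, ‖msOp μ m g x t‖ₑ ^ p1 ≤
        (∫⁻ t, ‖msOp μ m g x t‖ₑ ^ p0) ^ s * (A * (2 ^ ((k : ℝ) + 1) * V k)) ^ (1 - s) := by
      intro x
      have hmt := (hm.op_meas_t hgm x).enorm
      have := ENNReal.lintegral_mul_norm_pow_le (μ := (volume : Measure ℝ))
        (f := fun t => ‖msOp μ m g x t‖ₑ ^ p0) (g := fun t => ‖msOp μ m g x t‖ₑ)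
        (hmt.pow_const p0).aemeasurable hmt.aemeasurable hs0 hs1' (by ring)
      calc _ = ∫⁻ t, (‖msOp μ m g x t‖ₑ ^ p0) ^ s * ‖msOp μ m g x t‖ₑ ^ (1 - s) := by
            congr 1; ext t
            rw [← ENNReal.rpow_mul, ← ENNReal.rpow_add_of_nonneg _ _ (by positivity) hs1', hp0s, hs1]
            congr 1; ring
        _ ≤ _ := this
        _ ≤ _ := by
            gcongr
            exact (hm.op_one hgm x).trans (by gcongr)
    have hcalc : ∫⁻ x, (∫⁻ t, ‖msOp μ m g x t‖ₑ ^ p1) ^ κ ∂μ ≤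
        ((A * (2 ^ ((k : ℝ) + 1) * V k)) ^ (1 - s)) ^ κ * (B * (2 ^ (((k : ℝ) + 1) * p0) * V k) ^ (q0 / p0)) := by
      have hq0 : 0 ≤ q0 / p0 := by rw [← hsκ]; positivity
      calc _ ≤ ∫⁻ x, ((A * (2 ^ ((k : ℝ) + 1) * V k)) ^ (1 - s)) ^ κ *
                (∫⁻ t, ‖msOp μ m g x t‖ₑ ^ p0) ^ (q0 / p0) ∂μ := by
            apply lintegral_mono
            intro x
            dsimp only
            calc _ ≤ ((∫⁻ t, ‖msOp μ m g x t‖ₑ ^ p0) ^ s * (A * (2 ^ ((k : ℝ) + 1) * V k)) ^ (1 - s)) ^ κ := by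
                  gcongr; exact hx x
              _ = _ := by
                  rw [ENNReal.mul_rpow_of_nonneg _ _ hκ0.le, ← ENNReal.rpow_mul, hsκ, mul_comm]
        _ = ((A * (2 ^ ((k : ℝ) + 1) * V k)) ^ (1 - s)) ^ κ *
                ∫⁻ x, (∫⁻ t, ‖msOp μ m g x t‖ₑ ^ p0) ^ (q0 / p0) ∂μ := by
            rw [lintegral_const_mul]
            exact (hm.op_meas_int hgm p0).pow_const _
        _ ≤ _ := by
            gcongr
            refine (hB g hgm hgi).trans ?_
            gcongr
            exact msPiece_pow_lintegral hfm k hp0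
    calc _ ≤ (((A * (2 ^ ((k : ℝ) + 1) * V k)) ^ (1 - s)) ^ κ *
            (B * (2 ^ (((k : ℝ) + 1) * p0) * V k) ^ (q0 / p0))) ^ (1 / κ) := by gcongr
      _ = (A * (2 ^ ((k : ℝ) + 1) * V k)) ^ (1 - s) *
            (B ^ (1 / κ) * (2 ^ (((k : ℝ) + 1) * p0) * V k) ^ s) := by
          have hi : 0 ≤ 1 / κ := by positivity
          rw [ENNReal.mul_rpow_of_nonneg _ _ hi, ENNReal.mul_rpow_of_nonneg _ _ hi, ← ENNReal.rpow_mul,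
            ← ENNReal.rpow_mul _ (q0 / p0), ← hsκ, mul_assoc s, mul_one_div_cancel hκ0.ne',
            ← ENNReal.rpow_mul, mul_one, mul_one]
      _ = A ^ (1 - s) * B ^ (1 / κ) * ((2 ^ ((k : ℝ) + 1)) ^ (1 - s) * (2 ^ (((k : ℝ) + 1) * p0)) ^ s) *
            (V k ^ (1 - s) * V k ^ s) := by
          simp only [ENNReal.mul_rpow_of_nonneg _ _ hs1', ENNReal.mul_rpow_of_nonneg _ _ hs0]
          ring
      _ = _ := by
          rw [← ENNReal.rpow_add_of_nonneg _ _ hs1' hs0, sub_add_cancel, ENNReal.rpow_one,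
            ← ENNReal.rpow_mul, ← ENNReal.rpow_mul, ← ms_two_add,
            show ((k : ℝ) + 1) * (1 - s) + ((k : ℝ) + 1) * p0 * s = p1 + k * p1 by
              rw [mul_assoc, hp0s, hs1]; ring, ms_two_add]
          ring
  have hmain : (∫⁻ x, (∫⁻ t, ‖msOp μ m f x t‖ₑ ^ p) ^ κ ∂μ) ^ (1 / κ) ≤
      K * A ^ (1 - s) * 2 ^ p1 * B ^ (1 / κ) * (∫⁻ w, ‖f w‖ₑ ^ p ∂μ) := by
    calc _ ≤ (∫⁻ x, (∑' k : ℤ, K * ((∫⁻ t, ‖msOp μ m (msPiece f k) x t‖ₑ ^ p1) *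
              2 ^ ((k : ℝ) * (p - p1)))) ^ κ ∂μ) ^ (1 / κ) := by
          gcongr with x
          rw [ENNReal.tsum_mul_left]
          exact hK m hm f hfm hf x
      _ ≤ ∑' k : ℤ, (∫⁻ x, (K * ((∫⁻ t, ‖msOp μ m (msPiece f k) x t‖ₑ ^ p1) *
              2 ^ ((k : ℝ) * (p - p1)))) ^ κ ∂μ) ^ (1 / κ) :=
          ms_minkowski hκ (fun k => ((hm.op_meas_int (msPiece_meas hfm k) p1).mul_const _).const_mul _)
      _ ≤ ∑' k : ℤ, K * A ^ (1 - s) * 2 ^ p1 * B ^ (1 / κ) * (2 ^ ((k : ℝ) * p) * V k) := by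
          refine ENNReal.tsum_le_tsum fun k => ?_
          have hi : 0 ≤ 1 / κ := by positivity
          simp_rw [ENNReal.mul_rpow_of_nonneg _ _ hκ0.le]
          rw [lintegral_const_mul _ (((hm.op_meas_int (msPiece_meas hfm k) p1).pow_const _).mul_const _),
            lintegral_mul_const _ ((hm.op_meas_int (msPiece_meas hfm k) p1).pow_const _),
            ENNReal.mul_rpow_of_nonneg _ _ hi, ENNReal.mul_rpow_of_nonneg _ _ hi,
            ← ENNReal.rpow_mul, mul_one_div_cancel hκ0.ne', ENNReal.rpow_one,
            ← ENNReal.rpow_mul _ κ (1 / κ), mul_one_div_cancel hκ0.ne', ENNReal.rpow_one]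
          calc _ ≤ K * ((A ^ (1 - s) * B ^ (1 / κ) * 2 ^ p1 * (2 ^ ((k : ℝ) * p1) * V k)) *
                  2 ^ ((k : ℝ) * (p - p1))) := by gcongr; exact hpc k
            _ = _ := by
                rw [show (k : ℝ) * p = k * p1 + k * (p - p1) by ring, ms_two_add]
                ring
      _ ≤ _ := by
          rw [ENNReal.tsum_mul_left]
          gcongr
          exact msLev_sum_le hfm (by linarith)
  rw [one_div, ENNReal.rpow_inv_le_iff hκ0] at hmain
  refine hmain.trans_eq ?_
  rw [ENNReal.mul_rpow_of_nonneg _ _ hκ0.le, ENNReal.mul_rpow_of_nonneg _ _ hκ0.le, ← ENNReal.rpow_mul,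
    inv_mul_cancel₀ hκ0.ne', ENNReal.rpow_one]
  congr 2
  rw [ENNReal.coe_rpow_of_nonneg _ hκ0.le]
  push_cast
  rw [ENNReal.coe_rpow_of_nonneg _ hs1', ENNReal.coe_rpow_of_nonneg _ h1.le]
  rfl
end

end

section

/-- geometric weights -/
def msGeo (s : ℝ) (n i : ℕ) : ℝ≥0∞ := if i ≤ n then 2 ^ (-(((n : ℝ) - i) * s)) else 0

lemma ms_geo_tsum {s : ℝ} (hs : 0 < s) : ∑' k : ℕ, (2 : ℝ≥0∞) ^ (-((k : ℝ) * s)) ≠ ∞ := by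
  have h : ∀ k : ℕ, (2 : ℝ≥0∞) ^ (-((k : ℝ) * s)) = ((2 : ℝ≥0∞) ^ (-s)) ^ k := by
    intro k
    rw [← ENNReal.rpow_natCast, ← ENNReal.rpow_mul]; congr 1; ring
  simp_rw [h]
  rw [ENNReal.tsum_geometric]
  have : (2 : ℝ≥0∞) ^ (-s) < 1 := ENNReal.rpow_lt_one_of_one_lt_of_neg (by norm_num) (by linarith)
  simpa [tsub_eq_zero_iff_le] using this

lemma ms_geo_i (s : ℝ) (n : ℕ) : ∑' i, msGeo s n i ≤ ∑' k : ℕ, (2 : ℝ≥0∞) ^ (-((k : ℝ) * s)) := by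
  rw [tsum_eq_sum (s := Finset.range (n + 1))]
  · rw [← Finset.sum_range_reflect]
    refine le_trans (le_of_eq ?_) (ENNReal.sum_le_tsum (Finset.range (n + 1)))
    refine Finset.sum_congr rfl fun k hk => ?_
    have hk' : k ≤ n := by simpa [Nat.lt_succ_iff] using hk
    have : n + 1 - 1 - k ≤ n := by omega
    simp only [msGeo, this, if_true]
    congr 2
    rw [show n + 1 - 1 - k = n - k by omega, Nat.cast_sub hk']; ring
  · intro i hi
    have : ¬ i ≤ n := by simpa [Nat.lt_succ_iff] using hi
    simp [msGeo, this]

lemma ms_geo_n (s : ℝ) (i : ℕ) : ∑' n, msGeo s n i ≤ ∑' k : ℕ, (2 : ℝ≥0∞) ^ (-((k : ℝ) * s)) := by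
  rw [← Summable.sum_add_tsum_nat_add' (f := fun n => msGeo s n i) (k := i) ENNReal.summable]
  have h0 : ∑ n ∈ Finset.range i, msGeo s n i = 0 := by
    refine Finset.sum_eq_zero fun n hn => ?_
    have : ¬ i ≤ n := by simpa using hn
    simp [msGeo, this]
  rw [h0, zero_add]
  refine ENNReal.tsum_le_tsum fun k => ?_
  simp [msGeo]

lemma ms_sum {E : Type*} [MeasurableSpace E] (μ : Measure E) (q q1 d : ℝ) (h1 : 0 < q1) (hq : q1 < q)
    (hq1 : 1 < q) (hd : 0 < d) (M N : ℝ≥0) : ∃ K : ℝ≥0, ∀ (c : ℕ → E → ℝ≥0∞) (b : ℕ → ℝ≥0∞),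
    (∀ j, Measurable (c j)) → (∀ j x, c j x ≤ M * b j) →
    (∀ j, ∫⁻ x, c j x ^ q1 ∂μ ≤ N * 2 ^ (-((j : ℝ) * d)) * b j ^ q1) →
    ∫⁻ x, (∑' j, c j x) ^ q ∂μ ≤ K * ∑' j : ℕ, 2 ^ (-((j : ℝ) * d)) * b j ^ q := by
  set δ := d / 2 with hδ
  have hδ0 : 0 < δ := by positivity
  have hq0 : 0 < q := by linarith
  set s := δ / (q - 1) with hs
  have hs0 : 0 < s := div_pos hδ0 (by linarith)
  have hsq : s * (q - 1) = δ := by rw [hs]; field_simp [show q - 1 ≠ 0 by linarith]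
  set G := ∑' k : ℕ, (2 : ℝ≥0∞) ^ (-((k : ℝ) * s)) with hG
  have hGt : G ≠ ∞ := ms_geo_tsum hs0
  set G2 := ∑' k : ℕ, (2 : ℝ≥0∞) ^ (-((k : ℝ) * δ)) with hG2
  have hG2t : G2 ≠ ∞ := ms_geo_tsum hδ0
  obtain ⟨K, hK⟩ := ms_pigeon q q1 (2 ^ (δ / q)) h1 hq (Real.one_lt_rpow (by norm_num) (by positivity))
  set T : ℝ≥0∞ := K * (N * ((M + 1) ^ q * G ^ (q - 1) * G2)) with hT
  have hTt : T ≠ ∞ := by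
    have : G ^ (q - 1) ≠ ∞ := ENNReal.rpow_ne_top_of_nonneg (by linarith) hGt
    have : (M + 1 : ℝ≥0∞) ^ q ≠ ∞ := ENNReal.rpow_ne_top_of_nonneg (by linarith) (by simp)
    rw [hT]
    exact ENNReal.mul_ne_top (by simp) (ENNReal.mul_ne_top (by simp) (ENNReal.mul_ne_top
      (ENNReal.mul_ne_top (by assumption) (by assumption)) hG2t))
  refine ⟨T.toNNReal + 1, fun c b hc hcb hci => ?_⟩
  by_cases hb : ∀ j, b j ≠ ∞
  swap
  · push Not at hb
    obtain ⟨j, hj⟩ := hb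
    have : ∑' j : ℕ, (2 : ℝ≥0∞) ^ (-((j : ℝ) * d)) * b j ^ q = ∞ := by
      refine ENNReal.tsum_eq_top_of_eq_top ⟨j, ?_⟩
      rw [hj, ENNReal.top_rpow_of_pos hq0, ENNReal.mul_top]
      simp [ENNReal.rpow_eq_zero_iff]
    rw [this, ENNReal.mul_top (by simp)]
    exact le_top
  set H : ℕ → ℝ≥0∞ := fun n => ∑' i, msGeo (-δ) n i * b i ^ q with hH
  set D : ℕ → ℝ≥0∞ := fun n => (M + 1) * (G ^ (q - 1) * H n) ^ (1 / q) with hD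
  have hHs : ∀ n, H n = ∑ i ∈ Finset.range (n + 1), 2 ^ (((n : ℝ) - i) * δ) * b i ^ q := by
    intro n
    rw [hH]; simp only
    rw [tsum_eq_sum (s := Finset.range (n + 1))]
    · refine Finset.sum_congr rfl fun i hi => ?_
      have : i ≤ n := by simpa [Nat.lt_succ_iff] using hi
      simp [msGeo, this]
    · intro i hi
      have : ¬ i ≤ n := by simpa [Nat.lt_succ_iff] using hi
      simp [msGeo, this]
  have hHt : ∀ n, H n ≠ ∞ := by
    intro n
    rw [hHs]
    refine ENNReal.sum_ne_top.2 fun i _ => ENNReal.mul_ne_top (ms_two_ne_top _)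
      (ENNReal.rpow_ne_top_of_nonneg hq0.le (hb i))
  have hDt : ∀ n, D n ≠ ∞ := fun n => ENNReal.mul_ne_top (by simp)
    (ENNReal.rpow_ne_top_of_nonneg (by positivity) (ENNReal.mul_ne_top
      (ENNReal.rpow_ne_top_of_nonneg (by linarith) hGt) (hHt n)))
  have hDq : ∀ n, D n ^ q = (M + 1) ^ q * G ^ (q - 1) * H n := by
    intro n
    rw [hD]; simp only
    rw [ENNReal.mul_rpow_of_nonneg _ _ hq0.le, ← ENNReal.rpow_mul, one_div_mul_cancel hq0.ne',
      ENNReal.rpow_one, mul_assoc]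
  have hbs : ∀ n, (M + 1) * ∑ i ∈ Finset.range (n + 1), b i ≤ D n := by
    intro n
    rw [hD]; simp only
    gcongr
    rw [one_div, ENNReal.le_rpow_inv_iff hq0]
    have := ms_jensen_tsum hq1.le (fun i => msGeo s n i)
      (fun i => 2 ^ (((n : ℝ) - i) * s) * b i)
    have e1 : ∑' i, msGeo s n i * (2 ^ (((n : ℝ) - i) * s) * b i) =
        ∑ i ∈ Finset.range (n + 1), b i := by
      rw [tsum_eq_sum (s := Finset.range (n + 1))]
      · refine Finset.sum_congr rfl fun i hi => ?_
        have : i ≤ n := by simpa [Nat.lt_succ_iff] using hi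
        simp only [msGeo, this, if_true]
        rw [← mul_assoc, ← ms_two_add]; simp
      · intro i hi
        have : ¬ i ≤ n := by simpa [Nat.lt_succ_iff] using hi
        simp [msGeo, this]
    have e2 : ∀ i, msGeo s n i * (2 ^ (((n : ℝ) - i) * s) * b i) ^ q = msGeo (-δ) n i * b i ^ q := by
      intro i
      unfold msGeo
      split_ifs
      · rw [ENNReal.mul_rpow_of_nonneg _ _ hq0.le, ← mul_assoc, ← ENNReal.rpow_mul, ← ms_two_add,
          ← hsq]
        congr 2; ring
      · simp
    rw [e1] at this
    simp_rw [e2] at this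
    refine this.trans ?_
    gcongr
    exact ms_geo_i s n
  have hbD : ∀ n, b n ≤ D n := fun n => by
    refine le_trans ?_ (hbs n)
    calc b n ≤ ∑ i ∈ Finset.range (n + 1), b i :=
          Finset.single_le_sum (f := b) (fun _ _ => zero_le) (by simp)
      _ ≤ _ := le_mul_of_one_le_left zero_le (by simp)
  have hgrow : ∀ n, ENNReal.ofReal (2 ^ (δ / q)) * D n ≤ D (n + 1) := by
    intro n
    rw [← ENNReal.ofReal_rpow_of_pos (by norm_num)]
    have : (ENNReal.ofReal 2) ^ (δ / q) = ((2 : ℝ≥0∞) ^ δ) ^ (1 / q) := by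
      rw [← ENNReal.rpow_mul]; simp; congr 1
    rw [this, hD]; simp only
    rw [mul_left_comm, ← ENNReal.mul_rpow_of_nonneg _ _ (by positivity)]
    refine mul_le_mul_right (ENNReal.rpow_le_rpow ?_ (by positivity)) _
    rw [mul_left_comm]
    refine mul_le_mul_right ?_ _
    rw [hHs, hHs, Finset.mul_sum, Finset.sum_range_succ _ (n + 1)]
    refine le_trans (le_of_eq ?_) le_self_add
    refine Finset.sum_congr rfl fun i _ => ?_
    rw [← mul_assoc, ← ms_two_add]; congr 2; push_cast; ring
  have hpt : ∀ x, (∑' j, c j x) ^ q ≤ K * ∑' n, (c n x ^ q1 * D n ^ (q - q1)) := by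
    intro x
    refine hK (fun j => c j x) D (fun n => ?_) hgrow hDt
    refine le_trans ?_ (hbs n)
    rw [Finset.mul_sum]
    gcongr with i _
    refine (hcb i x).trans ?_
    gcongr
    exact le_self_add
  calc _ ≤ ∫⁻ x, K * ∑' n, (c n x ^ q1 * D n ^ (q - q1)) ∂μ := lintegral_mono hpt
    _ = K * ∑' n, (∫⁻ x, c n x ^ q1 ∂μ) * D n ^ (q - q1) := by
      rw [lintegral_const_mul' _ _ (by simp), lintegral_tsum]
      · congr 1; congr 1; ext n
        rw [lintegral_mul_const _ ((hc n).pow_const _)]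
      · intro n; exact (((hc n).pow_const _).mul_const _).aemeasurable
    _ ≤ K * ∑' n : ℕ, N * (2 ^ (-((n : ℝ) * d)) * D n ^ q) := by
      refine mul_le_mul_right (ENNReal.tsum_le_tsum fun n => ?_) _
      calc _ ≤ (N * 2 ^ (-((n : ℝ) * d)) * b n ^ q1) * D n ^ (q - q1) := by gcongr; exact hci n
        _ ≤ (N * 2 ^ (-((n : ℝ) * d)) * D n ^ q1) * D n ^ (q - q1) := by gcongr; exact hbD n
        _ = _ := by
          rw [mul_assoc, ← ENNReal.rpow_add_of_nonneg _ _ h1.le (by linarith)]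
          rw [mul_assoc, add_sub_cancel]
    _ = K * (N * ((M + 1) ^ q * G ^ (q - 1) * ∑' n : ℕ, ∑' i, (msGeo δ n i * (2 ^ (-((i : ℝ) * d)) * b i ^ q)))) := by
      rw [ENNReal.tsum_mul_left, ← ENNReal.tsum_mul_left (a := (M + 1) ^ q * G ^ (q - 1))]
      congr 3; ext n
      rw [hDq, mul_left_comm]
      congr 1
      rw [hH]; simp only
      rw [← ENNReal.tsum_mul_left]
      congr 1; ext i
      unfold msGeo
      split_ifs
      · rw [← mul_assoc, ← mul_assoc, ← ms_two_add, ← ms_two_add]; congr 2; rw [hδ]; ring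
      · simp
    _ ≤ T * ∑' j : ℕ, 2 ^ (-((j : ℝ) * d)) * b j ^ q := by
      rw [ENNReal.tsum_comm, hT]
      simp_rw [ENNReal.tsum_mul_right]
      have e : ∀ X : ℝ≥0∞, (K : ℝ≥0∞) * (N * ((M + 1) ^ q * G ^ (q - 1) * G2)) * X =
          K * (N * ((M + 1) ^ q * G ^ (q - 1) * (G2 * X))) := fun X => by ring
      rw [e, ← ENNReal.tsum_mul_left (a := G2)]
      refine mul_le_mul_right (mul_le_mul_right (mul_le_mul_right
        (ENNReal.tsum_le_tsum fun i => mul_le_mul_left ?_ _) _) _) _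
      exact ms_geo_n δ i
    _ ≤ _ := by
      gcongr
      rw [ENNReal.coe_add, ENNReal.coe_toNNReal hTt]
      exact le_self_add

end

section

lemma ms_stepB {E : Type*} [MeasurableSpace E] {μ : Measure E} [SFinite μ] (A N : ℝ≥0)
    (p0 q0 p q d : ℝ) (hp0 : 1 < p0)
    (hpq0 : p0 ≤ q0) (hq : q0 < q) (hd : 0 < d)
    (hmin : 1 / p < 1 - (q0 / q) * (1 - 1 / p0)) (hmax : (q0 / q) * (1 / p0) < 1 / p) : ∃ K : ℝ≥0,
    ∀ (m : ℕ → E → ℝ → E → ℂ), (∀ j, MsGood μ A (m j)) →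
    (∀ (j : ℕ) (g : E → ℂ), Measurable g → Integrable g μ →
      ∫⁻ x, (∫⁻ t, ‖msOp μ (m j) g x t‖ₑ ^ p0) ^ (q0 / p0) ∂μ ≤
        (N * 2 ^ (-((j : ℝ) * d))) * (∫⁻ w, ‖g w‖ₑ ^ p0 ∂μ) ^ (q0 / p0)) →
    ∀ f : ℕ → E → ℂ, (∀ j, Measurable (f j)) → (∀ j, Integrable (f j) μ) →
    ∫⁻ x, (∑' j, (∫⁻ t, ‖msOp μ (m j) (f j) x t‖ₑ ^ p) ^ (1 / p)) ^ q ∂μ ≤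
      K * ∑' j : ℕ, 2 ^ (-((j : ℝ) * d)) * ((∫⁻ w, ‖f j w‖ₑ ^ p ∂μ) ^ (1 / p)) ^ q := by
  have hq0 : 0 < q0 := by linarith
  have hqpos : 0 < q := by linarith
  have hpp0 : 0 < p0 := by linarith
  have hip0 : 1 / p0 < 1 := by rw [div_lt_one hpp0]; exact hp0
  have hip : 0 < 1 / p := lt_trans (by positivity) hmax
  have hp : 0 < p := by simpa using hip
  have hp1 : 1 / p < 1 := by
    have : 0 < (q0 / q) * (1 - 1 / p0) := mul_pos (by positivity) (by linarith)
    linarith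
  have hp1' : 1 < p := by rwa [div_lt_one hp] at hp1
  obtain ⟨q1, h1, h2⟩ : ∃ q1, max q0 (max (q0 * (1 - 1 / p0) / (1 - 1 / p)) (q0 * p / p0)) < q1 ∧
      q1 < q := by
    refine exists_between (max_lt hq (max_lt ?_ ?_))
    · rw [div_lt_iff₀ (by linarith)]
      have : q * (1 / p) < q * (1 - (q0 / q) * (1 - 1 / p0)) := by gcongr
      have e : q * (1 - (q0 / q) * (1 - 1 / p0)) = q - q0 * (1 - 1 / p0) := by field_simp
      nlinarith
    · have : q * ((q0 / q) * (1 / p0)) < q * (1 / p) := by gcongr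
      have e : q * ((q0 / q) * (1 / p0)) = q0 / p0 := by field_simp
      rw [e, mul_one_div, lt_div_iff₀ hp] at this
      calc q0 * p / p0 = q0 / p0 * p := by ring
        _ < q := this
  obtain ⟨h3, h4⟩ := max_lt_iff.1 h1
  obtain ⟨h4, h5⟩ := max_lt_iff.1 h4
  have hq1 : 0 < q1 := by linarith
  have h6 : q0 / p0 < q1 / p := by
    rw [lt_div_iff₀ hp]; calc q0 / p0 * p = q0 * p / p0 := by ring
      _ < q1 := h5
  have h7 : 1 ≤ q0 / p0 := by rw [le_div_iff₀ hpp0]; linarith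
  set κ := q1 / p with hκ
  have hκ1 : 1 ≤ κ := by linarith
  have hκ0 : 0 < κ := by linarith
  have hκq : 1 / p0 ≤ κ / q0 := by
    rw [le_div_iff₀ hq0]; calc 1 / p0 * q0 = q0 / p0 := by ring
      _ ≤ κ := h6.le
  set v := κ / q0 + 1 - 1 / p0 with hv
  have hv1 : 1 ≤ v := by rw [hv]; linarith
  have hv0 : 0 < v := by linarith
  set p1 := q0 / κ * v with hp1d
  have hp1e : p1 = 1 + q0 / κ * (1 - 1 / p0) := by
    rw [hp1d, hv]; field_simp; ring
  have hp1lt : p1 < p := by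
    rw [hp1e]
    rw [div_lt_iff₀ (by linarith)] at h4
    have : q0 / κ * (1 - 1 / p0) = q0 * (1 - 1 / p0) * (p / q1) := by rw [hκ]; field_simp
    have h8 : q0 * (1 - 1 / p0) * (p / q1) < (q1 * (1 - 1 / p)) * (p / q1) := by gcongr
    have e : (q1 * (1 - 1 / p)) * (p / q1) = p - 1 := by field_simp
    linarith
  obtain ⟨K1, hK1⟩ := ms_stepA (E := E) (μ := μ) A p p1 p0 q0 (1 / v) κ (by positivity) hp1lt
    hpp0 hκ1 (by positivity) (by rw [div_le_one hv0]; exact hv1)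
    (by
      have : 1 / v * p1 = q0 / κ := by rw [hp1d]; field_simp
      have e : 1 / v * p1 / p0 + (1 - 1 / v) * p1 = (1 / v * p1) / p0 + p1 - 1 / v * p1 := by ring
      rw [e, this, hp1e]; ring)
    (by rw [hp1d]; field_simp)
  obtain ⟨K2, hK2⟩ := ms_infty (E := E) (μ := μ) A p hp1'
  obtain ⟨K, hK⟩ := ms_sum μ q q1 d hq1 h2 (by linarith) hd (K2 ^ (1 / p)) (K1 * N)
  refine ⟨K, fun m hm hB f hfm hfi => hK (fun j x => (∫⁻ t, ‖msOp μ (m j) (f j) x t‖ₑ ^ p) ^ (1 / p))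
    (fun j => (∫⁻ w, ‖f j w‖ₑ ^ p ∂μ) ^ (1 / p)) ?_ ?_ ?_⟩
  · intro j
    exact ((hm j).op_meas_int (hfm j) p).pow_const _
  · intro j x
    rw [ENNReal.coe_rpow_of_nonneg _ (by positivity), ← ENNReal.mul_rpow_of_nonneg _ _ (by positivity)]
    gcongr
    exact hK2 (m j) (hm j) (f j) (hfm j) (hfi j) x
  · intro j
    have := hK1 (m j) (hm j) (N * 2 ^ (-((j : ℝ) * d))) (hB j) (f j) (hfm j) (hfi j)
    simp_rw [← ENNReal.rpow_mul]
    rw [show 1 / p * q1 = κ by rw [hκ]; ring]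
    refine this.trans_eq ?_
    push_cast; ring

end

section

section StepC
variable {E : Type*} [NormedAddCommGroup E] [NormedSpace ℝ E] [FiniteDimensional ℝ E]
  [MeasurableSpace E] [BorelSpace E] {μ : Measure E} [μ.IsAddHaarMeasure]

lemma ms_young {a g : E → ℝ≥0∞} (ha : Measurable a) (hg : Measurable g) {S I : ℝ≥0∞}
    (hS : ∀ u, a u ≤ S) (hI : ∫⁻ u, a u ∂μ = I) {s p q : ℝ} (hs : 0 < s) (hsp : s ≤ p) (hpq : p ≤ q) :
    ∫⁻ z, (∫⁻ w, a (z - w) * g w ^ s ∂μ) ^ (q / s) ∂μ ≤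
      I ^ ((p / s - 1) * (q / p)) * S ^ (q / p - 1) * I * (∫⁻ w, g w ^ p ∂μ) ^ (q / p) := by
  have hp : 0 < p := by linarith
  have hq : 0 < q := by linarith
  have h1 : 1 ≤ p / s := by rw [le_div_iff₀ hs]; linarith
  have h2 : 1 ≤ q / p := by rw [le_div_iff₀ hp]; linarith
  have hz : ∀ z, ∫⁻ w, a (z - w) ∂μ = I := fun z => by
    rw [lintegral_sub_left_eq_self (fun w => a w) z, hI]
  set P := ∫⁻ w, g w ^ p ∂μ with hP
  have hpt : ∀ z, (∫⁻ w, a (z - w) * g w ^ s ∂μ) ^ (q / s) ≤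
      I ^ ((p / s - 1) * (q / p)) * ((S * P) ^ (q / p - 1) * ∫⁻ w, a (z - w) * g w ^ p ∂μ) := by
    intro z
    have ham : Measurable fun w => a (z - w) := ha.comp (measurable_const.sub measurable_id)
    have hj := ms_jensen (μ := μ) h1 (a := fun w => a (z - w)) (h := fun w => g w ^ s)
      ham.aemeasurable (hg.pow_const s).aemeasurable
    simp_rw [← ENNReal.rpow_mul] at hj
    rw [show s * (p / s) = p by field_simp, hz z] at hj
    have hX : ∫⁻ w, a (z - w) * g w ^ p ∂μ ≤ S * P := by
      rw [hP, ← lintegral_const_mul _ (hg.pow_const p)]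
      exact lintegral_mono fun w => mul_le_mul_left (hS _) _
    calc _ = ((∫⁻ w, a (z - w) * g w ^ s ∂μ) ^ (p / s)) ^ (q / p) := by
          rw [← ENNReal.rpow_mul]; congr 1; field_simp
      _ ≤ (I ^ (p / s - 1) * ∫⁻ w, a (z - w) * g w ^ p ∂μ) ^ (q / p) := by gcongr
      _ = I ^ ((p / s - 1) * (q / p)) * (∫⁻ w, a (z - w) * g w ^ p ∂μ) ^ ((q / p - 1) + 1) := by
          rw [ENNReal.mul_rpow_of_nonneg _ _ (by positivity), ← ENNReal.rpow_mul, sub_add_cancel]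
      _ ≤ _ := by
          rw [ENNReal.rpow_add_of_nonneg _ _ (by linarith) zero_le_one, ENNReal.rpow_one]
          gcongr
  have hjm : Measurable fun z : E × E => a (z.1 - z.2) * g z.2 ^ p :=
    (ha.comp (measurable_fst.sub measurable_snd)).mul ((hg.comp measurable_snd).pow_const p)
  calc _ ≤ ∫⁻ z, I ^ ((p / s - 1) * (q / p)) * ((S * P) ^ (q / p - 1) * ∫⁻ w, a (z - w) * g w ^ p ∂μ) ∂μ :=
        lintegral_mono hpt
    _ = I ^ ((p / s - 1) * (q / p)) * ((S * P) ^ (q / p - 1) * (I * P)) := by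
        have hm : Measurable fun z => ∫⁻ w, a (z - w) * g w ^ p ∂μ := hjm.lintegral_prod_right'
        rw [lintegral_const_mul _ (hm.const_mul _), lintegral_const_mul _ hm]
        congr 2
        rw [lintegral_lintegral_swap hjm.aemeasurable, hP, ← lintegral_const_mul _ (hg.pow_const p)]
        congr 1; ext w
        rw [lintegral_mul_const, lintegral_sub_right_eq_self (fun z => a z) w, hI]
        exact ha.comp (measurable_id.sub measurable_const)
    _ = _ := by
        rw [ENNReal.mul_rpow_of_nonneg _ _ (by linarith)]
        have : P ^ (q / p) = P ^ (q / p - 1) * P := by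
          conv_rhs => rw [← ENNReal.rpow_one P, ← ENNReal.rpow_mul, one_mul]
          rw [← ENNReal.rpow_add_of_nonneg _ _ (by linarith) zero_le_one, sub_add_cancel]
        rw [this]; ring


lemma ms_stepC (A K : ℝ≥0) (η : E → ℝ≥0∞) (hη : Measurable η) (hηS : ∀ u, η u ≤ 1)
    (hηI : ∫⁻ u, η u ∂μ ≠ ∞) (ρ p q d : ℝ) (hρ : 1 ≤ ρ) (hρp : ρ ≤ p) (hpq : p ≤ q) (hd : 0 < d) :
    ∃ K' : ℝ≥0, ∀ (m : ℕ → E → ℝ → E → ℂ), (∀ j, MsGood μ A (m j)) →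
    (∀ (j : ℕ) x t w, 8 ≤ ‖x - w‖ → ‖m j x t w‖ₑ ≤ A * 2 ^ (-((j : ℝ) * d)) * η (x - w)) →
    (∀ (j : ℕ) x t w, t ∉ Icc (1 / 2 : ℝ) 4 → m j x t w = 0) →
    (∀ f : ℕ → E → ℂ, (∀ j, Measurable (f j)) → (∀ j, Integrable (f j) μ) →
      ∫⁻ x, (∑' j, (∫⁻ t, ‖msOp μ (m j) (f j) x t‖ₑ ^ ρ) ^ (1 / ρ)) ^ q ∂μ ≤
      K * ∑' j : ℕ, 2 ^ (-((j : ℝ) * d)) * ((∫⁻ w, ‖f j w‖ₑ ^ ρ ∂μ) ^ (1 / ρ)) ^ q) →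
    ∀ f : ℕ → E → ℂ, (∀ j, Measurable (f j)) → (∀ j, Integrable (f j) μ) →
      ∫⁻ x, (∑' j, (∫⁻ t, ‖msOp μ (m j) (f j) x t‖ₑ ^ ρ) ^ (1 / ρ)) ^ q ∂μ ≤
      K' * ∑' j : ℕ, 2 ^ (-((j : ℝ) * d)) * ((∫⁻ w, ‖f j w‖ₑ ^ p ∂μ) ^ (1 / p)) ^ q := by
  have hρ0 : 0 < ρ := by linarith
  have hp0 : 0 < p := by linarith
  have hq0 : 0 < q := by linarith
  set V := μ (ball (0 : E) 1) with hV
  have hV0 : V ≠ 0 := (measure_ball_pos μ _ one_pos).ne'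
  have hVt : V ≠ ∞ := measure_ball_lt_top.ne
  set a : E → ℝ≥0∞ := (closedBall (0 : E) 9).indicator 1 with ha
  have ham : Measurable a := measurable_one.indicator measurableSet_closedBall
  have haS : ∀ u, a u ≤ 1 := fun u => by rw [ha]; exact Set.indicator_le_self' (by simp) u
  have haI : ∫⁻ u, a u ∂μ = μ (closedBall (0 : E) 9) := by
    rw [ha, lintegral_indicator_one measurableSet_closedBall]
  set W := μ (closedBall (0 : E) 9) with hW
  have hWt : W ≠ ∞ := measure_closedBall_lt_top.ne
  set J := ∫⁻ u, η u ∂μ with hJ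
  set G0 := ∑' k : ℕ, (2 : ℝ≥0∞) ^ (-((k : ℝ) * d)) with hG0
  have hG0t : G0 ≠ ∞ := ms_geo_tsum hd
  have hp1ρ : 1 ≤ p / ρ := by rw [le_div_iff₀ hρ0]; linarith
  have h2 : 1 ≤ q / p := by rw [le_div_iff₀ hp0]; linarith
  set c1 : ℝ≥0∞ := W ^ ((p / ρ - 1) * (q / p)) * 1 ^ (q / p - 1) * W with hc1
  set c2 : ℝ≥0∞ := J ^ ((p / 1 - 1) * (q / p)) * 1 ^ (q / p - 1) * J with hc2
  have hc1t : c1 ≠ ∞ := by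
    rw [hc1, ENNReal.one_rpow, mul_one]
    exact ENNReal.mul_ne_top (ENNReal.rpow_ne_top_of_nonneg
      (mul_nonneg (by linarith) (by positivity)) hWt) hWt
  have hc2t : c2 ≠ ∞ := by
    rw [hc2, ENNReal.one_rpow, mul_one, div_one]
    exact ENNReal.mul_ne_top (ENNReal.rpow_ne_top_of_nonneg
      (mul_nonneg (by linarith) (by positivity)) hηI) hηI
  set T : ℝ≥0∞ := V⁻¹ * (2 ^ (q - 1) * (K * c1)) + 2 ^ (q - 1) * ((4 * A) ^ q * (G0 ^ (q - 1) * c2))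
    with hT
  have hTt : T ≠ ∞ := by
    have h3 : (2 : ℝ≥0∞) ^ (q - 1) ≠ ∞ := ms_two_ne_top _
    refine ENNReal.add_ne_top.2 ⟨ENNReal.mul_ne_top (by simpa using hV0) (ENNReal.mul_ne_top h3
      (ENNReal.mul_ne_top (by simp) hc1t)), ENNReal.mul_ne_top h3 (ENNReal.mul_ne_top
        (ENNReal.rpow_ne_top_of_nonneg hq0.le (ENNReal.mul_ne_top (by simp) (by simp)))
        (ENNReal.mul_ne_top (ENNReal.rpow_ne_top_of_nonneg (by linarith) hG0t) hc2t))⟩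
  refine ⟨T.toNNReal, fun m hm hfar hsupp hB f hfm hfi => ?_⟩
  rw [ENNReal.coe_toNNReal hTt]
  set Sg := ∑' j : ℕ, (2 : ℝ≥0∞) ^ (-((j : ℝ) * d)) * ((∫⁻ w, ‖f j w‖ₑ ^ p ∂μ) ^ (1 / p)) ^ q with hSg
  set G : E → ℝ≥0∞ := fun x => ∑' j, (∫⁻ t, ‖msOp μ (m j) (f j) x t‖ₑ ^ ρ) ^ (1 / ρ) with hG
  have hGm : Measurable G :=
    Measurable.tsum fun j => ((hm j).op_meas_int (hfm j) ρ).pow_const _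
  set near : E → ℕ → E → ℂ := fun z j => (closedBall z 9).indicator (f j) with hnear
  set far : E → ℕ → E → ℂ := fun z j => (closedBall z 9)ᶜ.indicator (f j) with hfard
  have hnm : ∀ z j, Measurable (near z j) := fun z j => (hfm j).indicator measurableSet_closedBall
  have hni : ∀ z j, Integrable (near z j) μ := fun z j => (hfi j).indicator measurableSet_closedBall
  have hfrm : ∀ z j, Measurable (far z j) := fun z j =>
    (hfm j).indicator measurableSet_closedBall.compl
  have hfri : ∀ z j, Integrable (far z j) μ := fun z j =>
    (hfi j).indicator measurableSet_closedBall.compl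
  set Gz : E → E → ℝ≥0∞ := fun z x => ∑' j, (∫⁻ t, ‖msOp μ (m j) (near z j) x t‖ₑ ^ ρ) ^ (1 / ρ)
    with hGz
  set h : ℕ → E → ℝ≥0∞ := fun j x => ∫⁻ w, η (x - w) * ‖f j w‖ₑ ^ (1 : ℝ) ∂μ with hh
  have hhm : ∀ j, Measurable (h j) := fun j => by
    have : Measurable fun z : E × E => η (z.1 - z.2) * ‖f j z.2‖ₑ ^ (1 : ℝ) :=
      (hη.comp (measurable_fst.sub measurable_snd)).mul (((hfm j).comp measurable_snd).enorm.pow_const _)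
    exact this.lintegral_prod_right'
  set R : E → ℝ≥0∞ := fun x => ∑' j : ℕ, 2 ^ (-((j : ℝ) * d)) * h j x with hR
  have hRm : Measurable R := Measurable.tsum fun j => (hhm j).const_mul _
  -- far pieces
  have hfarj : ∀ z x, x ∈ ball z 1 → ∀ j, (∫⁻ t, ‖msOp μ (m j) (far z j) x t‖ₑ ^ ρ) ^ (1 / ρ) ≤
      4 * A * (2 ^ (-((j : ℝ) * d)) * h j x) := by
    intro z x hx j
    have hpt : ∀ t, ‖msOp μ (m j) (far z j) x t‖ₑ ^ ρ ≤
        (Icc (1 / 2 : ℝ) 4).indicator (fun _ => (A * 2 ^ (-((j : ℝ) * d)) * h j x) ^ ρ) t := by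
      intro t
      by_cases ht : t ∈ Icc (1 / 2 : ℝ) 4
      · rw [Set.indicator_of_mem ht]
        refine ENNReal.rpow_le_rpow ?_ hρ0.le
        refine (msOp_le_lintegral _ _ _ _ _).trans ?_
        rw [hh]; simp only
        rw [← lintegral_const_mul]
        · refine lintegral_mono fun w => ?_
          by_cases hw : w ∈ closedBall z 9
          · simp [hfard, hw]
          · have h8 : 8 ≤ ‖x - w‖ := by
              rw [mem_closedBall, not_le] at hw
              rw [mem_ball] at hx
              have := dist_triangle w x z
              rw [← dist_eq_norm, dist_comm]; linarith
            simp only [hfard, Set.mem_compl_iff, hw, not_false_eq_true, Set.indicator_of_mem,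
              ENNReal.rpow_one]
            rw [← mul_assoc]
            gcongr
            exact hfar j x t w h8
        · exact (hη.comp (measurable_const.sub measurable_id)).mul ((hfm j).enorm.pow_const _)
      · have : msOp μ (m j) (far z j) x t = 0 := by
          unfold msOp
          simp [hsupp j x t _ ht]
        rw [this]; simp [hρ0]
    calc _ ≤ (∫⁻ t, (Icc (1 / 2 : ℝ) 4).indicator (fun _ => (A * 2 ^ (-((j : ℝ) * d)) * h j x) ^ ρ) t) ^ (1 / ρ) := by
          gcongr with t; exact hpt t
      _ = (A * 2 ^ (-((j : ℝ) * d)) * h j x) * (ENNReal.ofReal (4 - 1 / 2)) ^ (1 / ρ) := by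
          rw [lintegral_indicator_const measurableSet_Icc, Real.volume_Icc,
            ENNReal.mul_rpow_of_nonneg _ _ (by positivity), ← ENNReal.rpow_mul,
            mul_one_div_cancel hρ0.ne', ENNReal.rpow_one]
      _ ≤ (A * 2 ^ (-((j : ℝ) * d)) * h j x) * 4 := by
          gcongr
          calc _ ≤ (4 : ℝ≥0∞) ^ (1 / ρ) := by
                gcongr
                rw [show (4 : ℝ≥0∞) = ENNReal.ofReal 4 by simp]
                exact ENNReal.ofReal_le_ofReal (by norm_num)
            _ ≤ 4 ^ (1 : ℝ) := by
                refine ENNReal.rpow_le_rpow_of_exponent_le (by norm_num) ?_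
                rw [div_le_one hρ0]; exact hρ
            _ = 4 := by simp
      _ = _ := by ring
  have hsplit : ∀ z x, x ∈ ball z 1 → G x ≤ Gz z x + 4 * A * R x := by
    intro z x hx
    rw [hG, hGz, hR]; simp only
    rw [← ENNReal.tsum_mul_left, ← ENNReal.tsum_add]
    refine ENNReal.tsum_le_tsum fun j => ?_
    refine le_trans ?_ (add_le_add le_rfl (hfarj z x hx j))
    have hadd : ∀ t, msOp μ (m j) (f j) x t = msOp μ (m j) (near z j) x t + msOp μ (m j) (far z j) x t := by
      intro t
      rw [← (hm j).op_add (hni z j) (hfri z j)]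
      congr 1
      exact (Set.indicator_self_add_compl _ _).symm
    have hmt : ∀ g : E → ℂ, Measurable g → AEMeasurable (fun t => ‖msOp μ (m j) g x t‖ₑ) := fun g hg =>
      (((hm j).op_meas hg).comp (measurable_prodMk_left (x := x))).enorm.aemeasurable
    refine le_trans ?_ (ENNReal.lintegral_Lp_add_le (hmt _ (hnm z j)) (hmt _ (hfrm z j)) hρ)
    gcongr with t
    rw [hadd t]
    exact enorm_add_le _ _
  have hGq : ∀ z x, x ∈ ball z 1 → G x ^ q ≤ 2 ^ (q - 1) * (Gz z x ^ q + (4 * A * R x) ^ q) := by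
    intro z x hx
    refine (ENNReal.rpow_le_rpow (hsplit z x hx) hq0.le).trans ?_
    exact ENNReal.rpow_add_le_mul_rpow_add_rpow _ _ (by linarith)
  have hGzm : ∀ z, Measurable (Gz z) := fun z =>
    Measurable.tsum fun j => ((hm j).op_meas_int (hnm z j) ρ).pow_const _
  -- near
  have hN : ∀ z, ∫⁻ x, Gz z x ^ q ∂μ ≤ K * ∑' j : ℕ, 2 ^ (-((j : ℝ) * d)) *
      (∫⁻ w, a (z - w) * ‖f j w‖ₑ ^ ρ ∂μ) ^ (q / ρ) := by
    intro z
    refine (hB (near z) (hnm z) (hni z)).trans_eq ?_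
    congr 1; congr 1; ext j
    rw [← ENNReal.rpow_mul, one_div_mul_eq_div]
    congr 2
    refine lintegral_congr fun w => ?_
    by_cases hw : w ∈ closedBall z 9
    · have : z - w ∈ closedBall (0 : E) 9 := by
        rw [mem_closedBall, dist_zero_right, ← dist_eq_norm, dist_comm]; exact hw
      rw [ha, Set.indicator_of_mem this]; simp [hnear, hw]
    · have : z - w ∉ closedBall (0 : E) 9 := by
        rw [mem_closedBall, dist_zero_right, ← dist_eq_norm, dist_comm]; exact hw
      rw [ha, Set.indicator_of_notMem this]; simp [hnear, hw, hρ0]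
  have hNN : ∫⁻ z, ∑' j : ℕ, (2 : ℝ≥0∞) ^ (-((j : ℝ) * d)) *
      (∫⁻ w, a (z - w) * ‖f j w‖ₑ ^ ρ ∂μ) ^ (q / ρ) ∂μ ≤ c1 * Sg := by
    rw [lintegral_tsum]
    · rw [hSg, ← ENNReal.tsum_mul_left]
      refine ENNReal.tsum_le_tsum fun j => ?_
      rw [lintegral_const_mul' _ _ (ms_two_ne_top _), mul_left_comm]
      refine mul_le_mul_right ?_ _
      refine (ms_young (μ := μ) ham (hfm j).enorm haS haI hρ0 hρp hpq).trans_eq ?_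
      rw [← ENNReal.rpow_mul, one_div_mul_eq_div]
    · intro j
      have : Measurable fun z : E × E => a (z.1 - z.2) * ‖f j z.2‖ₑ ^ ρ :=
        (ham.comp (measurable_fst.sub measurable_snd)).mul (((hfm j).comp measurable_snd).enorm.pow_const _)
      exact ((this.lintegral_prod_right'.pow_const _).const_mul _).aemeasurable
  have hRR : ∫⁻ x, R x ^ q ∂μ ≤ G0 ^ (q - 1) * (c2 * Sg) := by
    calc _ ≤ ∫⁻ x, G0 ^ (q - 1) * ∑' j : ℕ, (2 : ℝ≥0∞) ^ (-((j : ℝ) * d)) * h j x ^ q ∂μ :=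
          lintegral_mono fun x => ms_jensen_tsum (by linarith) _ _
      _ = G0 ^ (q - 1) * ∑' j : ℕ, (2 : ℝ≥0∞) ^ (-((j : ℝ) * d)) * ∫⁻ x, h j x ^ q ∂μ := by
          rw [lintegral_const_mul' _ _ (ENNReal.rpow_ne_top_of_nonneg (by linarith) hG0t), lintegral_tsum]
          · congr 2; ext j; rw [lintegral_const_mul' _ _ (ms_two_ne_top _)]
          · intro j; exact (((hhm j).pow_const _).const_mul _).aemeasurable
      _ ≤ _ := by
          rw [hSg, ← ENNReal.tsum_mul_left (a := c2)]
          refine mul_le_mul_right (ENNReal.tsum_le_tsum fun j => ?_) _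
          rw [mul_left_comm]
          refine mul_le_mul_right ?_ _
          have := ms_young (μ := μ) hη (hfm j).enorm hηS rfl one_pos (by linarith : (1 : ℝ) ≤ p) hpq
          rw [div_one] at this
          refine this.trans_eq ?_
          rw [← ENNReal.rpow_mul, one_div_mul_eq_div, hc2, div_one]
  -- averaging
  have hjm : Measurable fun z : E × E => (ball (0 : E) 1).indicator 1 (z.1 - z.2) * G z.2 ^ q :=
    ((measurable_one.indicator measurableSet_ball).comp (measurable_fst.sub measurable_snd)).mul
      ((hGm.comp measurable_snd).pow_const _)
  have havg : ∫⁻ z, ∫⁻ x, (ball (0 : E) 1).indicator 1 (z - x) * G x ^ q ∂μ ∂μ = V * ∫⁻ x, G x ^ q ∂μ := by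
    rw [lintegral_lintegral_swap hjm.aemeasurable, ← lintegral_const_mul _ (hGm.pow_const q)]
    congr 1; ext x
    rw [lintegral_mul_const, lintegral_sub_right_eq_self (fun z => (ball (0 : E) 1).indicator 1 z) x,
      lintegral_indicator_one measurableSet_ball]
    exact (measurable_one.indicator measurableSet_ball).comp (measurable_id.sub measurable_const)
  have hR2 : Measurable fun z : E × E => (ball (0 : E) 1).indicator 1 (z.1 - z.2) * (4 * A * R z.2) ^ q :=
    ((measurable_one.indicator measurableSet_ball).comp (measurable_fst.sub measurable_snd)).mul
      (((hRm.comp measurable_snd).const_mul _).pow_const _)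
  have havg2 : ∫⁻ z, ∫⁻ x, (ball (0 : E) 1).indicator 1 (z - x) * (4 * A * R x) ^ q ∂μ ∂μ =
      V * ((4 * A) ^ q * ∫⁻ x, R x ^ q ∂μ) := by
    rw [lintegral_lintegral_swap hR2.aemeasurable, ← lintegral_const_mul _ (hRm.pow_const q),
      ← lintegral_const_mul _ ((hRm.pow_const q).const_mul _)]
    congr 1; ext x
    rw [lintegral_mul_const, lintegral_sub_right_eq_self (fun z => (ball (0 : E) 1).indicator 1 z) x,
      lintegral_indicator_one measurableSet_ball, ENNReal.mul_rpow_of_nonneg _ _ hq0.le]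
    exact (measurable_one.indicator measurableSet_ball).comp (measurable_id.sub measurable_const)
  have hmain : V * ∫⁻ x, G x ^ q ∂μ ≤ 2 ^ (q - 1) * (K * (c1 * Sg)) +
      2 ^ (q - 1) * (V * ((4 * A) ^ q * (G0 ^ (q - 1) * (c2 * Sg)))) := by
    rw [← havg]
    calc _ ≤ ∫⁻ z, 2 ^ (q - 1) * (K * ∑' j : ℕ, 2 ^ (-((j : ℝ) * d)) *
              (∫⁻ w, a (z - w) * ‖f j w‖ₑ ^ ρ ∂μ) ^ (q / ρ)) +
            2 ^ (q - 1) * ∫⁻ x, (ball (0 : E) 1).indicator 1 (z - x) * (4 * A * R x) ^ q ∂μ ∂μ := by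
          refine lintegral_mono fun z => ?_
          calc _ ≤ ∫⁻ x, 2 ^ (q - 1) * Gz z x ^ q +
                2 ^ (q - 1) * ((ball (0 : E) 1).indicator 1 (z - x) * (4 * A * R x) ^ q) ∂μ := by
                refine lintegral_mono fun x => ?_
                by_cases hx : z - x ∈ ball (0 : E) 1
                · have : x ∈ ball z 1 := by
                    rwa [mem_ball, dist_zero_right, ← dist_eq_norm, dist_comm] at hx
                  simp only [Set.indicator_of_mem hx, Pi.one_apply, one_mul]
                  rw [← mul_add]; exact hGq z x this
                · simp [Set.indicator_of_notMem hx]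
            _ = 2 ^ (q - 1) * (∫⁻ x, Gz z x ^ q ∂μ) +
                2 ^ (q - 1) * ∫⁻ x, (ball (0 : E) 1).indicator 1 (z - x) * (4 * A * R x) ^ q ∂μ := by
                rw [lintegral_add_left (((hGzm z).pow_const q).const_mul _),
                  lintegral_const_mul' _ _ (ms_two_ne_top _), lintegral_const_mul' _ _ (ms_two_ne_top _)]
            _ ≤ _ := by
                refine add_le_add (mul_le_mul_right (hN z) _) le_rfl
      _ = 2 ^ (q - 1) * (K * ∫⁻ z, ∑' j : ℕ, 2 ^ (-((j : ℝ) * d)) *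
              (∫⁻ w, a (z - w) * ‖f j w‖ₑ ^ ρ ∂μ) ^ (q / ρ) ∂μ) +
            2 ^ (q - 1) * (V * ((4 * A) ^ q * ∫⁻ x, R x ^ q ∂μ)) := by
          rw [lintegral_add_right _ (hR2.lintegral_prod_right'.const_mul _),
            lintegral_const_mul' _ _ (ms_two_ne_top _), lintegral_const_mul' _ _ (by simp),
            lintegral_const_mul' _ _ (ms_two_ne_top _), havg2]
      _ ≤ _ := by
          refine add_le_add (mul_le_mul_right (mul_le_mul_right hNN _) _) (mul_le_mul_right
            (mul_le_mul_right (mul_le_mul_right hRR _) _) _)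
  calc _ = V⁻¹ * (V * ∫⁻ x, G x ^ q ∂μ) := by
        rw [← mul_assoc, ENNReal.inv_mul_cancel hV0 hVt, one_mul]
    _ ≤ V⁻¹ * (2 ^ (q - 1) * (K * (c1 * Sg)) +
      2 ^ (q - 1) * (V * ((4 * A) ^ q * (G0 ^ (q - 1) * (c2 * Sg))))) := mul_le_mul_right hmain _
    _ = V⁻¹ * (2 ^ (q - 1) * (K * (c1 * Sg))) +
      (V⁻¹ * V) * (2 ^ (q - 1) * (((4 * A) ^ q * (G0 ^ (q - 1) * (c2 * Sg))))) := by ring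
    _ = T * Sg := by rw [ENNReal.inv_mul_cancel hV0 hVt, hT]; ring

end StepC

end

section

lemma ms_sphere_prob {d : ℕ} (hd : 2 ≤ d) : IsProbabilityMeasure (sphereMeasure d) := by
  have : Nonempty (Fin d) := ⟨⟨0, by omega⟩⟩
  constructor
  unfold sphereMeasure
  rw [Measure.smul_apply, Measure.map_apply measurable_subtype_coe MeasurableSet.univ, preimage_univ,
    smul_eq_mul]
  refine ENNReal.inv_mul_cancel ?_ (measure_ne_top _ _)
  have := Measure.toSphere_ne_zero (volume : Measure (Euc d))
  rwa [Ne, Measure.measure_univ_eq_zero]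

lemma ms_sphere_ae {d : ℕ} : ∀ᵐ y ∂(sphereMeasure d), ‖y‖ = 1 := by
  unfold sphereMeasure
  refine Measure.ae_smul_measure ?_ _
  rw [ae_map_iff measurable_subtype_coe.aemeasurable]
  · exact Filter.Eventually.of_forall fun y => by simp
  · exact measurableSet_eq_fun measurable_norm measurable_const

lemma ms_sphere_lint {d : ℕ} {g : Euc d → ℝ≥0∞} (hg : Measurable g) :
    ∫⁻ y, g y ∂(sphereMeasure d) = ((volume : Measure (Euc d)).toSphere univ)⁻¹ *
      ∫⁻ y : sphere (0 : Euc d) 1, g y ∂(volume : Measure (Euc d)).toSphere := by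
  unfold sphereMeasure
  rw [lintegral_smul_measure, lintegral_map hg measurable_subtype_coe, smul_eq_mul]

lemma ms_polar {d : ℕ} (hd : 2 ≤ d) : ∃ K : ℝ≥0, ∀ g : Euc d → ℝ≥0∞, Measurable g →
    ∫⁻ t in Icc (1 / 2 : ℝ) 4, ∫⁻ y, g (t • y) ∂(sphereMeasure d) ≤ K * ∫⁻ z, g z := by
  have : Nonempty (Fin d) := ⟨⟨0, by omega⟩⟩
  set μ := (volume : Measure (Euc d)) with hμ
  set c := (μ.toSphere univ)⁻¹ with hc
  have hct : c ≠ ∞ := by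
    have := Measure.toSphere_ne_zero μ
    rw [hc, Ne, ENNReal.inv_eq_top, Measure.measure_univ_eq_zero]; exact this
  refine ⟨(c * 2 ^ (d - 1)).toNNReal, fun g hg => ?_⟩
  rw [ENNReal.coe_toNNReal (ENNReal.mul_ne_top hct (by simp))]
  have h1 : ∫⁻ z, g z ∂μ ≥ ∫⁻ y : sphere (0 : Euc d) 1, (∫⁻ r in Ioi (0 : ℝ),
      ENNReal.ofReal (r ^ (d - 1)) * g (r • (y : Euc d))) ∂μ.toSphere := by
    have mp := (μ.measurePreserving_homeomorphUnitSphereProd)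
    have hgm : Measurable fun z : sphere (0 : Euc d) 1 × Ioi (0 : ℝ) => g ((z.2 : ℝ) • (z.1 : Euc d)) :=
      hg.comp ((measurable_subtype_coe.comp measurable_snd).smul (measurable_subtype_coe.comp measurable_fst))
    have e := mp.lintegral_comp hgm
    calc ∫⁻ z, g z ∂μ ≥ ∫⁻ z in {(0 : Euc d)}ᶜ, g z ∂μ := setLIntegral_le_lintegral _ _
      _ = ∫⁻ z : ({(0 : Euc d)}ᶜ : Set (Euc d)), g z ∂(μ.comap Subtype.val) :=
          (lintegral_subtype_comap (measurableSet_singleton _).compl _).symm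
      _ = ∫⁻ z, g ((z.2 : ℝ) • (z.1 : Euc d)) ∂(μ.toSphere.prod
            (Measure.volumeIoiPow (Module.finrank ℝ (Euc d) - 1))) := by
          rw [← e]
          refine lintegral_congr fun z => ?_
          congr 1
          have hz : ‖(z : Euc d)‖ ≠ 0 := norm_ne_zero_iff.2 z.2
          simp [smul_smul, hz]
      _ = _ := by
          rw [lintegral_prod _ hgm.aemeasurable]
          refine lintegral_congr fun y => ?_
          unfold Measure.volumeIoiPow
          rw [lintegral_withDensity_eq_lintegral_mul₀, ← lintegral_subtype_comap measurableSet_Ioi]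
          · simp [finrank_euclideanSpace]
          · fun_prop
          · exact (hgm.comp measurable_prodMk_left).aemeasurable
  have hgm2 : Measurable fun z : ℝ × sphere (0 : Euc d) 1 => g (z.1 • (z.2 : Euc d)) :=
      hg.comp (measurable_fst.smul (measurable_subtype_coe.comp measurable_snd))
  calc _ = c * ∫⁻ y : sphere (0 : Euc d) 1, (∫⁻ t in Icc (1 / 2 : ℝ) 4, g (t • (y : Euc d))) ∂μ.toSphere := by
        rw [← lintegral_lintegral_swap (f := fun t (y : sphere (0 : Euc d) 1) => g (t • (y : Euc d))) hgm2.aemeasurable, ← lintegral_const_mul' _ _ hct]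
        refine lintegral_congr fun t => ?_
        exact ms_sphere_lint (g := fun y => g (t • y)) (hg.comp (measurable_const_smul t))
    _ ≤ c * ∫⁻ y : sphere (0 : Euc d) 1, 2 ^ (d - 1) * (∫⁻ r in Ioi (0 : ℝ),
      ENNReal.ofReal (r ^ (d - 1)) * g (r • (y : Euc d))) ∂μ.toSphere := by
        gcongr with y
        rw [← lintegral_const_mul' _ _ (by simp)]
        refine le_trans (setLIntegral_mono' (g := fun t => 2 ^ (d - 1) * (ENNReal.ofReal (t ^ (d - 1)) *
          g (t • (y : Euc d)))) measurableSet_Icc fun t ht => ?_) (lintegral_mono_set fun t ht => ?_)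
        · rw [← mul_assoc]
          refine le_mul_of_one_le_left zero_le ?_
          rw [show (2 : ℝ≥0∞) = ENNReal.ofReal 2 by simp, ← ENNReal.ofReal_pow (by norm_num),
            ← ENNReal.ofReal_mul (by positivity), ← mul_pow, ENNReal.one_le_ofReal]
          exact one_le_pow₀ (by linarith [ht.1])
        · exact lt_of_lt_of_le (by norm_num) ht.1
    _ ≤ _ := by
        rw [lintegral_const_mul' _ _ (by simp), ← mul_assoc]
        gcongr

end

section

lemma ms_phi_smooth {d : ℕ} {β₀ : ℝ → ℝ} (hβ : IsBump β₀) :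
    ContDiff ℝ (⊤ : ℕ∞) (fun ξ : Euc d => (β₀ ‖ξ‖ : ℂ)) := by
  refine Complex.ofRealCLM.contDiff.comp (contDiff_iff_contDiffAt.2 fun ξ => ?_)
  by_cases h : ξ = 0
  · have : (fun ξ : Euc d => β₀ ‖ξ‖) =ᶠ[nhds ξ] fun _ => 1 := by
      filter_upwards [Metric.ball_mem_nhds ξ (show (0 : ℝ) < 1 / 2 by norm_num)] with y hy
      refine hβ.2.1 _ ?_
      rw [abs_norm]
      simpa [h] using hy
    exact contDiffAt_const.congr_of_eventuallyEq this
  · exact hβ.1.contDiffAt.comp ξ (contDiffAt_norm ℝ h)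

lemma ms_phi_supp {d : ℕ} {β₀ : ℝ → ℝ} (hβ : IsBump β₀) :
    HasCompactSupport (fun ξ : Euc d => (β₀ ‖ξ‖ : ℂ)) := by
  refine HasCompactSupport.intro (isCompact_closedBall (0 : Euc d) 1) fun x hx => ?_
  rw [hβ.2.2, Complex.ofReal_zero]
  rw [abs_norm]
  simpa using hx

lemma ms_conv {d : ℕ} {Ψ f : Euc d → ℂ} (hΨ : Integrable Ψ) (hf : Integrable f) (z : Euc d) :
    𝓕⁻ (fun ξ => Ψ ξ * 𝓕 f ξ) z = ∫ w, 𝓕⁻ Ψ (z - w) * f w := by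
  have := VectorFourier.integral_fourierIntegral_smul_eq_flip (e := 𝐞) (μ := (volume : Measure (Euc d)))
    (ν := (volume : Measure (Euc d))) (L := innerₗ (Euc d)) (f := f)
    (g := fun ξ => 𝐞 (inner ℝ ξ z) • Ψ ξ) Real.continuous_fourierChar (by
      simpa using (continuous_inner : Continuous fun z : Euc d × Euc d => inner ℝ z.1 z.2)) hf (by
      refine (Real.fourierIntegral_convergent_iff (-z)).2 hΨ |>.congr ?_
      filter_upwards with x
      simp)
  rw [Real.fourierInv_eq]
  refine Eq.trans ?_ (this.trans ?_)
  · refine integral_congr_ae (Filter.Eventually.of_forall fun ξ => ?_)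
    simp only [Circle.smul_def, smul_eq_mul]
    rw [Real.fourier_eq]
    simp [VectorFourier.fourierIntegral, Circle.smul_def]
    ring
  · refine integral_congr_ae (Filter.Eventually.of_forall fun w => ?_)
    simp only [smul_eq_mul]
    rw [mul_comm, Real.fourierInv_eq]
    congr 1
    simp only [VectorFourier.fourierIntegral]
    refine integral_congr_ae (Filter.Eventually.of_forall fun ξ => ?_)
    simp only [sub_eq_add_neg, inner_add_right, inner_neg_right, LinearMap.flip_apply, innerₗ_apply_apply,
      AddChar.map_add_eq_mul, Circle.smul_def, smul_eq_mul, Circle.coe_mul]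
    rw [real_inner_comm ξ w]
    ring

lemma ms_dil {d : ℕ} (Φ : Euc d → ℂ) (a : ℝ) (ha : 0 < a) (u : Euc d) :
    𝓕⁻ (fun ξ => Φ (a⁻¹ • ξ)) u = ((a ^ d : ℝ) : ℂ) * 𝓕⁻ Φ (a • u) := by
  rw [Real.fourierInv_eq, Real.fourierInv_eq]
  have := Measure.integral_comp_inv_smul (volume : Measure (Euc d))
    (fun ξ => 𝐞 (inner ℝ ξ (a • u)) • Φ ξ) a
  rw [finrank_euclideanSpace, Fintype.card_fin, abs_of_pos (by positivity), Complex.real_smul] at this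
  rw [← this]
  refine integral_congr_ae (Filter.Eventually.of_forall fun ξ => ?_)
  simp only [inner_smul_left, inner_smul_right]
  congr 2
  simp [ha.ne']

end

section

/-- dilated kernel -/
def msKn {d : ℕ} (k : SchwartzMap (Euc d) ℂ) (n : ℕ) (u : Euc d) : ℂ :=
  ((((2 : ℝ) ^ n) ^ d : ℝ) : ℂ) * k (((2 : ℝ) ^ n) • u)

/-- kernel of the frequency localization -/
def msKj {d : ℕ} (k : SchwartzMap (Euc d) ℂ) : ℕ → Euc d → ℂ
  | 0 => msKn k 0
  | (j + 1) => fun u => msKn k (j + 1) u - msKn k j u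

lemma msKn_cont {d : ℕ} (k : SchwartzMap (Euc d) ℂ) (n : ℕ) : Continuous (msKn k n) := by
  unfold msKn
  exact continuous_const.mul (k.continuous.comp (continuous_const_smul _))

lemma msKj_cont {d : ℕ} (k : SchwartzMap (Euc d) ℂ) (j : ℕ) : Continuous (msKj k j) := by
  cases j with
  | zero => exact msKn_cont k 0
  | succ j => exact (msKn_cont k _).sub (msKn_cont k _)

lemma msKn_bdd {d : ℕ} (k : SchwartzMap (Euc d) ℂ) (n : ℕ) : ∃ M : ℝ, ∀ u, ‖msKn k n u‖ ≤ M := by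
  obtain ⟨C, hC⟩ := k.decay 0 0
  refine ⟨((2 : ℝ) ^ n) ^ d * C, fun u => ?_⟩
  unfold msKn
  rw [norm_mul, Complex.norm_real, Real.norm_of_nonneg (by positivity)]
  have := hC.2 (((2 : ℝ) ^ n) • u)
  simp only [pow_zero, one_mul, norm_iteratedFDeriv_zero] at this
  gcongr

lemma msKj_bdd {d : ℕ} (k : SchwartzMap (Euc d) ℂ) (j : ℕ) : ∃ M : ℝ, ∀ u, ‖msKj k j u‖ ≤ M := by
  cases j with
  | zero => exact msKn_bdd k 0
  | succ j =>
    obtain ⟨M, hM⟩ := msKn_bdd k (j + 1)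
    obtain ⟨M', hM'⟩ := msKn_bdd k j
    exact ⟨M + M', fun u => (norm_sub_le _ _).trans (add_le_add (hM u) (hM' u))⟩

lemma msKn_int {d : ℕ} (k : SchwartzMap (Euc d) ℂ) (n : ℕ) :
    ∫⁻ u, ‖msKn k n u‖ₑ = ∫⁻ u, ‖k u‖ₑ := by
  have h : ∫⁻ u : Euc d, ‖k (((2 : ℝ) ^ n) • u)‖ₑ = ENNReal.ofReal |(((2 : ℝ) ^ n) ^ Module.finrank ℝ (Euc d))⁻¹| *
      ∫⁻ u, ‖k u‖ₑ := by
    rw [← smul_eq_mul, ← lintegral_smul_measure, ← Measure.map_addHaar_smul _ (show ((2 : ℝ) ^ n) ≠ 0 by positivity),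
      lintegral_map k.continuous.measurable.enorm (measurable_const_smul _)]
  have e : ∀ u, ‖msKn k n u‖ₑ = ENNReal.ofReal (((2 : ℝ) ^ n) ^ d) * ‖k (((2 : ℝ) ^ n) • u)‖ₑ := fun u => by
    unfold msKn
    rw [enorm_mul]
    congr 1
    rw [← ofReal_norm, Complex.norm_real, Real.norm_of_nonneg (by positivity)]
  simp_rw [e]
  rw [lintegral_const_mul' _ _ (by simp), h, finrank_euclideanSpace, Fintype.card_fin, ← mul_assoc,
    ← ENNReal.ofReal_mul (by positivity), abs_of_pos (by positivity), mul_inv_cancel₀ (by positivity)]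
  simp

lemma msKj_int {d : ℕ} (k : SchwartzMap (Euc d) ℂ) (j : ℕ) :
    ∫⁻ u, ‖msKj k j u‖ₑ ≤ 2 * ∫⁻ u, ‖k u‖ₑ := by
  cases j with
  | zero =>
    refine (msKn_int k 0).le.trans ?_
    exact le_mul_of_one_le_left zero_le (by norm_num)
  | succ j =>
    calc _ ≤ ∫⁻ u, (‖msKn k (j + 1) u‖ₑ + ‖msKn k j u‖ₑ) := lintegral_mono fun u => enorm_sub_le
      _ = _ := by
        rw [lintegral_add_left (msKn_cont k _).measurable.enorm, msKn_int, msKn_int, two_mul]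

lemma msKn_decay {d : ℕ} (k : SchwartzMap (Euc d) ℂ) : ∃ C : ℝ, 0 < C ∧ ∀ (n : ℕ) (u : Euc d), u ≠ 0 →
    ‖msKn k n u‖ ≤ C * (((2 : ℝ) ^ n) ^ d)⁻¹ * (‖u‖ ^ (2 * d))⁻¹ := by
  obtain ⟨C, hC, h⟩ := k.decay (2 * d) 0
  refine ⟨C, hC, fun n u hu => ?_⟩
  have := h (((2 : ℝ) ^ n) • u)
  simp only [norm_iteratedFDeriv_zero] at this
  rw [norm_smul, Real.norm_of_nonneg (by positivity)] at this
  unfold msKn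
  rw [norm_mul, Complex.norm_real, Real.norm_of_nonneg (by positivity)]
  have hu' : 0 < ‖u‖ := norm_pos_iff.2 hu
  rw [← div_eq_mul_inv, ← div_eq_mul_inv, div_div, le_div_iff₀ (by positivity)]
  refine le_trans (le_of_eq ?_) this
  rw [mul_pow]; ring

lemma msKj_decay {d : ℕ} (k : SchwartzMap (Euc d) ℂ) : ∃ C : ℝ, 0 < C ∧ ∀ (n : ℕ) (u : Euc d), u ≠ 0 →
    ‖msKj k n u‖ ≤ C * (((2 : ℝ) ^ n) ^ d)⁻¹ * (‖u‖ ^ (2 * d))⁻¹ := by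
  obtain ⟨C, hC, h⟩ := msKn_decay k
  refine ⟨C * (1 + 2 ^ d), by positivity, fun n u hu => ?_⟩
  cases n with
  | zero =>
    refine (h 0 u hu).trans ?_
    gcongr
    exact le_mul_of_one_le_right hC.le (by linarith [show (0 : ℝ) < 2 ^ d by positivity])
  | succ j =>
    refine (norm_sub_le _ _).trans ((add_le_add (h _ u hu) (h _ u hu)).trans (le_of_eq ?_))
    rw [pow_succ, mul_pow]
    field_simp

lemma ms_freqLoc {d : ℕ} {β₀ : ℝ → ℝ} (hβ : IsBump β₀) : ∃ k : SchwartzMap (Euc d) ℂ,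
    ∀ (j : ℕ) (f : Euc d → ℂ), Integrable f → ∀ z,
      freqLoc d β₀ j f z = ∫ w, msKj k j (z - w) * f w := by
  have hc := ms_phi_supp (d := d) hβ
  have hs := ms_phi_smooth (d := d) hβ
  set Φ : Euc d → ℂ := fun ξ : Euc d => (β₀ ‖ξ‖ : ℂ) with hΦ
  have hI : Integrable Φ := hs.continuous.integrable_of_hasCompactSupport hc
  let S : SchwartzMap (Euc d) ℂ := hc.toSchwartzMap hs
  have hS : (S : Euc d → ℂ) = Φ := rfl
  refine ⟨𝓕⁻ S, ?_⟩
  have hk : ∀ n u, 𝓕⁻ (fun ξ : Euc d => Φ (((2 : ℝ) ^ n)⁻¹ • ξ)) u = msKn (𝓕⁻ S) n u := fun n u => by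
    rw [ms_dil _ _ (by positivity)]
    unfold msKn
    rw [SchwartzMap.fourierInv_coe]
    rfl
  have hIn : ∀ n : ℕ, Integrable (fun ξ : Euc d => Φ (((2 : ℝ) ^ n)⁻¹ • ξ)) := fun n =>
    hI.comp_smul (by positivity)
  intro j f hf z
  cases j with
  | zero =>
    have := ms_conv (hIn 0) hf z
    have e : ∀ u, 𝓕⁻ (fun ξ : Euc d => Φ (((2 : ℝ) ^ 0)⁻¹ • ξ)) u = msKj (𝓕⁻ S) 0 u := fun u => hk 0 u
    simp only [e] at this
    rw [← this]
    unfold freqLoc betaJ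
    simp [hΦ]
  | succ j =>
    have := ms_conv ((hIn (j + 1)).sub (hIn j)) hf z
    have e : ∀ u, 𝓕⁻ ((fun ξ : Euc d => Φ (((2 : ℝ) ^ (j + 1))⁻¹ • ξ)) - fun ξ : Euc d => Φ (((2 : ℝ) ^ j)⁻¹ • ξ)) u
        = msKj (𝓕⁻ S) (j + 1) u := fun u => by
      rw [show msKj (𝓕⁻ S) (j + 1) u = msKn (𝓕⁻ S) (j + 1) u - msKn (𝓕⁻ S) j u from rfl, ← hk, ← hk]
      rw [Real.fourierInv_eq, Real.fourierInv_eq, Real.fourierInv_eq, ← integral_sub]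
      · refine integral_congr_ae (Filter.Eventually.of_forall fun w => ?_)
        simp [smul_sub]
      · refine ((Real.fourierIntegral_convergent_iff (-u)).2 (hIn (j + 1))).congr ?_
        filter_upwards with x; simp
      · refine ((Real.fourierIntegral_convergent_iff (-u)).2 (hIn j)).congr ?_
        filter_upwards with x; simp
    simp only [e] at this
    rw [← this]
    unfold freqLoc betaJ
    have z1 : ∀ n : ℕ, (2 : ℝ) ^ (-(n : ℤ)) = ((2 : ℝ) ^ n)⁻¹ := fun n => by simp
    refine congrFun (congrArg _ (funext fun ξ => ?_)) z
    have z2 := z1 (j + 1)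
    push_cast at z2
    simp only [hΦ, Pi.sub_apply, norm_smul, norm_inv, norm_pow, Real.norm_ofNat, z2, z1]
    simp

lemma ms_freqLoc_junk {d : ℕ} {β₀ : ℝ → ℝ} (j : ℕ) (f : Euc d → ℂ) (hf : ¬ Integrable f) (z : Euc d) :
    freqLoc d β₀ j f z = 0 := by
  have : ∀ ξ, 𝓕 f ξ = 0 := fun ξ => by
    rw [Real.fourier_eq]
    exact integral_undef fun h => hf ((Real.fourierIntegral_convergent_iff ξ).1 h)
  unfold freqLoc
  simp [this, Real.fourierInv_eq]

lemma ms_Aj_junk {d : ℕ} {χ β₀ : ℝ → ℝ} (j : ℕ) (f : Euc d → ℂ) (hf : ¬ Integrable f) (x : Euc d) (t : ℝ) :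
    Aj d χ β₀ j f x t = 0 := by
  unfold Aj sphAvg
  simp [ms_freqLoc_junk j f hf]

end

section

/-- kernel of the localized spherical averages -/
def msM {d : ℕ} (χ : ℝ → ℝ) (K : Euc d → ℂ) (x : Euc d) (t : ℝ) (w : Euc d) : ℂ :=
  (χ t : ℂ) * ∫ y, K (x - t • y - w) ∂(sphereMeasure d)

lemma ms_chi_bdd {χ : ℝ → ℝ} (hχ : IsCutoff χ) : ∃ B : ℝ≥0, ∀ t, ‖(χ t : ℂ)‖ₑ ≤ B := by
  have hc : HasCompactSupport χ := HasCompactSupport.intro (isCompact_Icc (a := (1 / 2 : ℝ)) (b := 4))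
    fun x hx => by
      by_contra h
      exact hx (hχ.2.2 h)
  obtain ⟨C, hC⟩ := hχ.1.continuous.bounded_above_of_compact_support hc
  refine ⟨C.toNNReal, fun t => ?_⟩
  rw [← ofReal_norm, Complex.norm_real]
  exact ENNReal.ofReal_le_ofReal (hC t)

lemma ms_chi_zero {χ : ℝ → ℝ} (hχ : IsCutoff χ) {t : ℝ} (ht : t ∉ Icc (1 / 2 : ℝ) 4) : χ t = 0 := by
  by_contra h
  exact ht (hχ.2.2 h)

lemma msM_meas {d : ℕ} (hd : 2 ≤ d) {χ : ℝ → ℝ} (hχ : IsCutoff χ) {K : Euc d → ℂ} (hK : Continuous K) :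
    Measurable (fun z : (Euc d × ℝ) × Euc d => msM χ K z.1.1 z.1.2 z.2) := by
  have := ms_sphere_prob hd
  unfold msM
  refine (Complex.measurable_ofReal.comp (hχ.1.continuous.measurable.comp
    (measurable_snd.comp measurable_fst))).mul ?_
  have h : Continuous fun z : ((Euc d × ℝ) × Euc d) × Euc d => K (z.1.1.1 - z.1.1.2 • z.2 - z.1.2) :=
    hK.comp (by fun_prop)
  exact (h.stronglyMeasurable.integral_prod_right' (ν := sphereMeasure d)).measurable

lemma msM_enorm {d : ℕ} {χ : ℝ → ℝ} {B : ℝ≥0} (hB : ∀ t, ‖(χ t : ℂ)‖ₑ ≤ B) (K : Euc d → ℂ) (x t w) :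
    ‖msM χ K x t w‖ₑ ≤ B * ∫⁻ y, ‖K (x - t • y - w)‖ₑ ∂(sphereMeasure d) := by
  unfold msM
  rw [enorm_mul]
  exact mul_le_mul' (hB t) (enorm_integral_le_lintegral_enorm _)

lemma msM_h3 {d : ℕ} (hd : 2 ≤ d) {χ : ℝ → ℝ} {B : ℝ≥0} (hB : ∀ t, ‖(χ t : ℂ)‖ₑ ≤ B) {K : Euc d → ℂ}
    (hK : Continuous K) (x t) : ∫⁻ w, ‖msM χ K x t w‖ₑ ≤ B * ∫⁻ u, ‖K u‖ₑ := by
  have := ms_sphere_prob hd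
  calc _ ≤ ∫⁻ w, B * ∫⁻ y, ‖K (x - t • y - w)‖ₑ ∂(sphereMeasure d) := lintegral_mono fun w => msM_enorm hB K x t w
    _ = B * ∫⁻ y, (∫⁻ w, ‖K (x - t • y - w)‖ₑ) ∂(sphereMeasure d) := by
      rw [lintegral_const_mul' _ _ ENNReal.coe_ne_top, lintegral_lintegral_swap]
      exact (hK.comp (by fun_prop : Continuous fun z : Euc d × Euc d => x - t • z.2 - z.1)).measurable.enorm.aemeasurable
    _ = B * ∫⁻ y, (∫⁻ u, ‖K u‖ₑ) ∂(sphereMeasure d) := by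
      congr 1
      refine lintegral_congr fun y => ?_
      exact lintegral_sub_left_eq_self (fun u => ‖K u‖ₑ) _
    _ = _ := by simp

lemma msM_h4 {d : ℕ} {χ : ℝ → ℝ} (hχ : IsCutoff χ) {B : ℝ≥0} (hB : ∀ t, ‖(χ t : ℂ)‖ₑ ≤ B)
    {P : ℝ≥0} (hP : ∀ g : Euc d → ℝ≥0∞, Measurable g →
      ∫⁻ t in Icc (1 / 2 : ℝ) 4, ∫⁻ y, g (t • y) ∂(sphereMeasure d) ≤ P * ∫⁻ z, g z) {K : Euc d → ℂ}
    (hK : Continuous K) (x w) : ∫⁻ t, ‖msM χ K x t w‖ₑ ≤ B * (P * ∫⁻ u, ‖K u‖ₑ) := by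
  calc _ = ∫⁻ t in Icc (1 / 2 : ℝ) 4, ‖msM χ K x t w‖ₑ := by
        symm
        refine setLIntegral_eq_of_support_subset fun t ht => ?_
        by_contra h
        apply ht
        simp [msM, ms_chi_zero hχ h]
    _ ≤ ∫⁻ t in Icc (1 / 2 : ℝ) 4, B * ∫⁻ y, ‖K (x - t • y - w)‖ₑ ∂(sphereMeasure d) :=
        lintegral_mono fun t => msM_enorm hB K x t w
    _ ≤ B * (P * ∫⁻ z, ‖K (x - z - w)‖ₑ) := by
        rw [lintegral_const_mul' _ _ ENNReal.coe_ne_top]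
        gcongr
        exact hP (fun z => ‖K (x - z - w)‖ₑ) (hK.comp (by fun_prop)).measurable.enorm
    _ = _ := by
        congr 2
        have := lintegral_sub_left_eq_self (μ := (volume : Measure (Euc d))) (fun u => ‖K u‖ₑ) (x - w)
        rw [← this]
        refine lintegral_congr fun z => ?_
        rw [sub_right_comm]

lemma msM_bdd {d : ℕ} (hd : 2 ≤ d) {χ : ℝ → ℝ} {B : ℝ≥0} (hB : ∀ t, ‖(χ t : ℂ)‖ₑ ≤ B) {K : Euc d → ℂ}
    (hM : ∃ M : ℝ, ∀ u, ‖K u‖ ≤ M) : ∃ M : ℝ, ∀ x t w, ‖msM χ K x t w‖ ≤ M := by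
  have := ms_sphere_prob hd
  obtain ⟨M, hM⟩ := hM
  refine ⟨B * M, fun x t w => ?_⟩
  unfold msM
  rw [norm_mul]
  have h1 : ‖(χ t : ℂ)‖ ≤ B := by
    have := hB t
    rw [← ofReal_norm, ENNReal.ofReal_le_iff_le_toReal (by simp)] at this
    simpa using this
  refine mul_le_mul h1 ?_ (norm_nonneg _) B.2
  have := norm_integral_le_of_norm_le_const (μ := sphereMeasure d) (f := fun y => K (x - t • y - w))
    (C := M) (Filter.Eventually.of_forall fun y => hM _)
  simpa using this

lemma msM_op {d : ℕ} (hd : 2 ≤ d) {χ β₀ : ℝ → ℝ} {K : Euc d → ℂ} (hK : Continuous K)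
    (hM : ∃ M : ℝ, ∀ u, ‖K u‖ ≤ M) (j : ℕ) (f : Euc d → ℂ) (hf : Integrable f)
    (h : ∀ z, freqLoc d β₀ j f z = ∫ w, K (z - w) * f w) (x t) :
    Aj d χ β₀ j f x t = msOp volume (msM χ K) f x t := by
  have := ms_sphere_prob hd
  obtain ⟨M, hM⟩ := hM
  unfold Aj sphAvg msOp msM
  simp_rw [h, mul_assoc, ← integral_mul_const]
  rw [integral_const_mul, integral_integral_swap]
  have hfi : Integrable (fun z : Euc d × Euc d => f z.2) ((sphereMeasure d).prod volume) := hf.comp_snd _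
  exact hfi.bdd_mul (c := M) (hK.comp (by fun_prop : Continuous fun z : Euc d × Euc d => x - t • z.1 - z.2)).aestronglyMeasurable
    (Filter.Eventually.of_forall fun z => hM _)

lemma msM_far {d : ℕ} (hd : 2 ≤ d) {χ : ℝ → ℝ} (hχ : IsCutoff χ) {B : ℝ≥0} (hB : ∀ t, ‖(χ t : ℂ)‖ₑ ≤ B)
    {K : Euc d → ℂ} {C a : ℝ} (hC : 0 < C) (ha : 0 ≤ a) (hK : ∀ u, u ≠ 0 → ‖K u‖ ≤ C * a * (‖u‖ ^ (2 * d))⁻¹)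
    (x t w) (hxw : 8 ≤ ‖x - w‖) : ‖msM χ K x t w‖ₑ ≤ B * ENNReal.ofReal (C * 4 ^ (2 * d)) * ENNReal.ofReal a *
      ENNReal.ofReal ((1 + ‖x - w‖) ^ (-((2 * d : ℕ) : ℝ))) := by
  have := ms_sphere_prob hd
  by_cases ht : t ∈ Icc (1 / 2 : ℝ) 4
  swap
  · simp [msM, ms_chi_zero hχ ht]
  refine (msM_enorm hB K x t w).trans ?_
  rw [mul_assoc, mul_assoc]
  gcongr
  rw [← ENNReal.ofReal_mul ha, ← ENNReal.ofReal_mul (by positivity)]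
  refine (lintegral_mono_ae (g := fun _ => ENNReal.ofReal (C * 4 ^ (2 * d) * (a * (1 + ‖x - w‖) ^ (-((2 * d : ℕ) : ℝ))))) ?_).trans (by simp)
  filter_upwards [ms_sphere_ae] with y hy
  rw [← ofReal_norm]
  refine ENNReal.ofReal_le_ofReal ?_
  have h1 : ‖t • y‖ ≤ 4 := by
    rw [norm_smul, hy, mul_one, Real.norm_of_nonneg (by linarith [ht.1])]; exact ht.2
  have h2 : ‖x - w‖ ≤ ‖x - t • y - w‖ + ‖t • y‖ := by
    have := norm_add_le (x - t • y - w) (t • y)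
    rwa [show x - t • y - w + t • y = x - w by abel] at this
  have h3 : (1 + ‖x - w‖) / 4 ≤ ‖x - t • y - w‖ := by linarith
  have h4 : 0 < (1 + ‖x - w‖) / 4 := by positivity
  refine (hK _ (norm_pos_iff.1 (h4.trans_le h3))).trans ?_
  rw [Real.rpow_neg (by positivity), Real.rpow_natCast]
  calc C * a * (‖x - t • y - w‖ ^ (2 * d))⁻¹ ≤ C * a * (((1 + ‖x - w‖) / 4) ^ (2 * d))⁻¹ := by gcongr
    _ = _ := by rw [div_pow, inv_div]; field_simp

/-- Everything about the kernels. -/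
lemma ms_kernel {d : ℕ} (hd : 2 ≤ d) {χ β₀ : ℝ → ℝ} (hχ : IsCutoff χ) (hβ : IsBump β₀) :
    ∃ (A : ℝ≥0) (η : Euc d → ℝ≥0∞) (m : ℕ → Euc d → ℝ → Euc d → ℂ),
      Measurable η ∧ (∀ u, η u ≤ 1) ∧ ∫⁻ u, η u ≠ ∞ ∧ (∀ j, MsGood volume A (m j)) ∧
      (∀ (j : ℕ) x t w, 8 ≤ ‖x - w‖ → ‖m j x t w‖ₑ ≤ A * 2 ^ (-((j : ℝ) * d)) * η (x - w)) ∧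
      (∀ j x t w, t ∉ Icc (1 / 2 : ℝ) 4 → m j x t w = 0) ∧
      (∀ (j : ℕ) f, Integrable f → ∀ x t, Aj d χ β₀ j f x t = msOp volume (m j) f x t) := by
  obtain ⟨k, hk⟩ := ms_freqLoc (d := d) hβ
  obtain ⟨B, hB⟩ := ms_chi_bdd hχ
  obtain ⟨P, hP⟩ := ms_polar hd
  obtain ⟨C, hC, hdec⟩ := msKj_decay k
  have hI : ∫⁻ u, ‖k u‖ₑ ≠ ∞ := (k.integrable (μ := volume)).2.ne
  set I : ℝ≥0 := (∫⁻ u, ‖k u‖ₑ).toNNReal with hIdef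
  have hI' : ∫⁻ u, ‖k u‖ₑ = I := (ENNReal.coe_toNNReal hI).symm
  have hKI : ∀ j, ∫⁻ u, ‖msKj k j u‖ₑ ≤ (2 * I : ℝ≥0) := fun j => by
    refine (msKj_int k j).trans ?_
    rw [hI']; simp
  set D : ℝ≥0 := (C * 4 ^ (2 * d)).toNNReal
  refine ⟨B * (2 * I) + B * (P * (2 * I)) + B * D, fun u => ENNReal.ofReal ((1 + ‖u‖) ^ (-((2 * d : ℕ) : ℝ))),
    fun j => msM χ (msKj k j), ?_, ?_, ?_, ?_, ?_, ?_, ?_⟩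
  · fun_prop
  · intro u
    rw [ENNReal.ofReal_le_one]
    exact Real.rpow_le_one_of_one_le_of_nonpos (by linarith [norm_nonneg u]) (by simp)
  · refine (finite_integral_one_add_norm ?_).ne
    rw [finrank_euclideanSpace, Fintype.card_fin]
    norm_cast
    omega
  · intro j
    refine ⟨msM_meas hd hχ (msKj_cont k j), msM_bdd hd hB (msKj_bdd k j), fun x t => ?_, fun x w => ?_⟩
    · refine (msM_h3 hd hB (msKj_cont k j) x t).trans ?_
      refine (mul_le_mul_right (hKI j) _).trans ?_
      rw [← ENNReal.coe_mul, ENNReal.coe_le_coe, add_assoc]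
      exact le_self_add
    · refine (msM_h4 hχ hB hP (msKj_cont k j) x w).trans ?_
      refine (mul_le_mul_right (mul_le_mul_right (hKI j) _) _).trans ?_
      rw [← ENNReal.coe_mul, ← ENNReal.coe_mul, ENNReal.coe_le_coe, add_right_comm]
      exact le_add_self
  · intro j x t w h
    refine (msM_far hd hχ hB hC (by positivity) (hdec j) x t w h).trans ?_
    have e : ENNReal.ofReal (((2 : ℝ) ^ j) ^ d)⁻¹ = 2 ^ (-((j : ℝ) * d)) := by
      rw [← pow_mul, ENNReal.ofReal_inv_of_pos (by positivity), ENNReal.rpow_neg, ← Nat.cast_mul, ENNReal.rpow_natCast,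
        ENNReal.ofReal_pow (by norm_num)]
      simp
    rw [e]
    gcongr
    change _ * (D : ℝ≥0∞) ≤ _
    rw [← ENNReal.coe_mul, ENNReal.coe_le_coe]
    exact le_add_self
  · intro j x t w h
    simp [msM, ms_chi_zero hχ h]
  · intro j f hf x t
    exact msM_op hd (msKj_cont k j) (msKj_bdd k j) j f hf (hk j f hf) x t

end

section

lemma ms_hB {d : ℕ} {χ β₀ : ℝ → ℝ} (p₀ q₀ : ℝ≥0∞) (hp₀1 : 1 < p₀) (hp₀q₀ : p₀ ≤ q₀) (hq₀ : q₀ ≠ ∞)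
    (C₀ : ℝ≥0) (j : ℕ)
    (hC₀ : (2 : ℝ≥0∞) ^ (((j : ℝ) * d) / q₀.toReal) * AjOpNorm d χ β₀ j p₀ q₀ p₀ ≤ C₀)
    (m : Euc d → ℝ → Euc d → ℂ)
    (hm : ∀ f, Integrable f → ∀ x t, Aj d χ β₀ j f x t = msOp volume m f x t)
    (g : Euc d → ℂ) (hg : Measurable g) (hgi : Integrable g) :
    ∫⁻ x, (∫⁻ t, ‖msOp volume m g x t‖ₑ ^ p₀.toReal) ^ (q₀.toReal / p₀.toReal) ≤
      (((C₀ + 1) ^ q₀.toReal : ℝ≥0) * 2 ^ (-((j : ℝ) * d))) * (∫⁻ w, ‖g w‖ₑ ^ p₀.toReal) ^ (q₀.toReal / p₀.toReal) := by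
  have hp₀ : p₀ ≠ ∞ := ne_top_of_le_ne_top hq₀ hp₀q₀
  have hp₀0 : p₀ ≠ 0 := (zero_lt_one.trans hp₀1).ne'
  have hq₀0 : q₀ ≠ 0 := ((zero_lt_one.trans hp₀1).trans_le hp₀q₀).ne'
  have P0 : 0 < p₀.toReal := ENNReal.toReal_pos hp₀0 hp₀
  have Q0 : 0 < q₀.toReal := ENNReal.toReal_pos hq₀0 hq₀
  set P := p₀.toReal
  set Q := q₀.toReal
  have hR : 0 < Q / P := by positivity
  -- reformulated bound
  have key : ∀ f, Integrable f → eLpNorm f p₀ volume ≤ 1 →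
      ∫⁻ x, (∫⁻ t, ‖msOp volume m f x t‖ₑ ^ P) ^ (Q / P) ≤ ((C₀ + 1) ^ Q : ℝ≥0) * 2 ^ (-((j : ℝ) * d)) := by
    intro f hf h1
    have h2 : mixedNorm d q₀ p₀ (Aj d χ β₀ j f) ≤ AjOpNorm d χ β₀ j p₀ q₀ p₀ :=
      le_iSup₂ (f := fun (f : Euc d → ℂ) (_ : eLpNorm f p₀ volume ≤ 1) => mixedNorm d q₀ p₀ (Aj d χ β₀ j f)) f h1
    have h3 := (mul_le_mul_right h2 ((2 : ℝ≥0∞) ^ (((j : ℝ) * d) / Q))).trans hC₀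
    have e1 : mixedNorm d q₀ p₀ (Aj d χ β₀ j f) =
        (∫⁻ x, (∫⁻ t, ‖msOp volume m f x t‖ₑ ^ P) ^ (Q / P)) ^ (1 / Q) := by
      unfold mixedNorm lqNorm
      simp only [hq₀, hp₀, if_false]
      congr 1
      refine lintegral_congr fun x => ?_
      rw [← ENNReal.rpow_mul, one_div_mul_eq_div]
      congr 1
      refine lintegral_congr fun t => ?_
      rw [hm f hf]; rfl
    rw [e1] at h3
    have h4 := ENNReal.rpow_le_rpow h3 Q0.le
    rw [ENNReal.mul_rpow_of_nonneg _ _ Q0.le, ← ENNReal.rpow_mul, ← ENNReal.rpow_mul, div_mul_cancel₀ _ Q0.ne',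
      div_mul_cancel₀ _ Q0.ne', ENNReal.rpow_one] at h4
    calc _ = 2 ^ (-((j : ℝ) * d)) * (2 ^ ((j : ℝ) * d) * ∫⁻ x, (∫⁻ t, ‖msOp volume m f x t‖ₑ ^ P) ^ (Q / P)) := by
          rw [← mul_assoc, ← ms_two_add]; simp
      _ ≤ 2 ^ (-((j : ℝ) * d)) * (C₀ : ℝ≥0∞) ^ Q := by gcongr
      _ ≤ _ := by
          rw [mul_comm, ENNReal.coe_rpow_of_nonneg _ Q0.le]
          gcongr
          simp
  have hN : (((C₀ + 1) ^ Q : ℝ≥0) * 2 ^ (-((j : ℝ) * d)) : ℝ≥0∞) ≠ 0 := by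
    refine mul_ne_zero ?_ ?_
    · rw [ENNReal.coe_ne_zero]; positivity
    · exact (ENNReal.rpow_pos (by norm_num) (by norm_num)).ne'
  have ea : eLpNorm g p₀ volume = (∫⁻ w, ‖g w‖ₑ ^ P) ^ (1 / P) :=
    eLpNorm_eq_lintegral_rpow_enorm_toReal hp₀0 hp₀
  have eb : (∫⁻ w, ‖g w‖ₑ ^ P) ^ (Q / P) = (eLpNorm g p₀ volume) ^ Q := by
    rw [ea, ← ENNReal.rpow_mul, one_div_mul_eq_div]
  rw [eb]
  set a := eLpNorm g p₀ volume with ha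
  rcases eq_or_ne a ∞ with h | hat
  · rw [h, ENNReal.top_rpow_of_pos Q0, ENNReal.mul_top hN]; exact le_top
  rcases eq_or_ne a 0 with h | ha0
  · have : g =ᵐ[volume] 0 := (eLpNorm_eq_zero_iff hg.aestronglyMeasurable hp₀0).1 h
    have h0 : ∀ x t, msOp volume m g x t = 0 := fun x t => by
      unfold msOp
      refine (integral_congr_ae (g := fun _ => 0) ?_).trans (by simp)
      filter_upwards [this] with w hw
      simp [hw]
    simp [h0, P0, hR]
  have har : 0 < a.toReal := ENNReal.toReal_pos ha0 hat
  set c : ℂ := ((a.toReal⁻¹ : ℝ) : ℂ) with hc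
  have hce : ‖c‖ₑ = a⁻¹ := by
    rw [hc, ← ofReal_norm, Complex.norm_real, Real.norm_of_nonneg (by positivity), ENNReal.ofReal_inv_of_pos har,
      ENNReal.ofReal_toReal hat]
  have h5 := key (c • g) (hgi.smul c) (by
    rw [eLpNorm_const_smul, hce, ← ha, ENNReal.inv_mul_cancel ha0 hat])
  have h6 : ∀ x t, ‖msOp volume m (c • g) x t‖ₑ ^ P = (a⁻¹) ^ P * ‖msOp volume m g x t‖ₑ ^ P := fun x t => by
    rw [← ENNReal.mul_rpow_of_nonneg _ _ P0.le, ← hce, ← enorm_mul]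
    congr 2
    unfold msOp
    rw [← integral_const_mul]
    refine integral_congr_ae (Filter.Eventually.of_forall fun w => ?_)
    simp only [Pi.smul_apply, smul_eq_mul]
    ring
  have hai : a⁻¹ ≠ ∞ := ENNReal.inv_ne_top.2 ha0
  simp_rw [h6] at h5
  have h7 : ∀ x, (∫⁻ t, a⁻¹ ^ P * ‖msOp volume m g x t‖ₑ ^ P) ^ (Q / P) =
      a⁻¹ ^ Q * (∫⁻ t, ‖msOp volume m g x t‖ₑ ^ P) ^ (Q / P) := fun x => by
    rw [lintegral_const_mul' _ _ (ENNReal.rpow_ne_top_of_nonneg P0.le hai), ENNReal.mul_rpow_of_nonneg _ _ hR.le,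
      ← ENNReal.rpow_mul, mul_div_cancel₀ _ P0.ne']
  simp_rw [h7] at h5
  rw [lintegral_const_mul' _ _ (ENNReal.rpow_ne_top_of_nonneg Q0.le hai)] at h5
  calc _ = a ^ Q * (a⁻¹ ^ Q * ∫⁻ x, (∫⁻ t, ‖msOp volume m g x t‖ₑ ^ P) ^ (Q / P)) := by
        rw [← mul_assoc, ← ENNReal.mul_rpow_of_nonneg _ _ Q0.le, ENNReal.mul_inv_cancel ha0 hat]; simp
    _ ≤ a ^ Q * _ := mul_le_mul_right h5 _
    _ = _ := mul_comm _ _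

/-- Hölder in the compactly supported time variable. -/
lemma ms_holder_t {r ρ : ℝ} (hr : 0 < r) (hrρ : r ≤ ρ) : ∃ K : ℝ≥0, ∀ g : ℝ → ℝ≥0∞, Measurable g →
    (∀ t, t ∉ Icc (1 / 2 : ℝ) 4 → g t = 0) →
    (∫⁻ t, g t ^ r) ^ (1 / r) ≤ K * (∫⁻ t, g t ^ ρ) ^ (1 / ρ) := by
  have hρ : 0 < ρ := hr.trans_le hrρ
  refine ⟨4 ^ (1 / r), fun g hg h0 => ?_⟩
  rcases hrρ.eq_or_lt with rfl | hlt
  · refine le_mul_of_one_le_left zero_le ?_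
    rw [ENNReal.one_le_coe_iff]
    exact NNReal.one_le_rpow (by norm_num) (by positivity)
  have hS : ∀ s : ℝ, 0 < s → ∫⁻ t, g t ^ s = ∫⁻ t in Icc (1 / 2 : ℝ) 4, g t ^ s := fun s hs => by
    symm
    refine setLIntegral_eq_of_support_subset fun t ht => ?_
    by_contra h
    exact ht (by simp [h0 t h, hs])
  rw [hS r hr, hS ρ hρ]
  set ν := (volume : Measure ℝ).restrict (Icc (1 / 2 : ℝ) 4)
  have := ENNReal.lintegral_mul_le_Lp_mul_Lq ν (p := ρ / r) (q := (ρ / r).conjExponent)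
    (Real.HolderConjugate.conjExponent ((one_lt_div hr).2 hlt)) (f := fun t => g t ^ r) (g := fun _ => 1)
    (hg.pow_const r).aemeasurable aemeasurable_const
  simp only [Pi.mul_apply, mul_one, ENNReal.one_rpow, lintegral_const, one_mul, ← ENNReal.rpow_mul] at this
  rw [mul_div_cancel₀ _ hr.ne'] at this
  have h1 : ν univ ≤ 4 := by
    simp only [ν, Measure.restrict_apply_univ, Real.volume_Icc]
    rw [show (4 : ℝ≥0∞) = ENNReal.ofReal 4 by simp]
    exact ENNReal.ofReal_le_ofReal (by norm_num)
  have hcj : 1 < (ρ / r).conjExponent := (Real.HolderConjugate.conjExponent ((one_lt_div hr).2 hlt)).symm.lt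
  have h2 : ν univ ^ (1 / (ρ / r).conjExponent) ≤ 4 := by
    calc _ ≤ (4 : ℝ≥0∞) ^ (1 / (ρ / r).conjExponent) := by gcongr; 
      _ ≤ 4 ^ (1 : ℝ) := ENNReal.rpow_le_rpow_of_exponent_le (by norm_num) (by
          rw [div_le_one (by linarith)]; exact hcj.le)
      _ = 4 := by simp
  have h3 := ENNReal.rpow_le_rpow (this.trans (mul_le_mul_right h2 _)) (show 0 ≤ 1 / r by positivity)
  refine h3.trans (le_of_eq ?_)
  rw [ENNReal.mul_rpow_of_nonneg _ _ (by positivity), ← ENNReal.rpow_mul, mul_comm, ENNReal.coe_rpow_of_nonneg _ (by positivity)]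
  congr 2
  field_simp

end

/-- Proposition 6.1: under the hypothesis
`sup_j 2^{jd/q₀} ‖𝒜_j‖_{L^{p₀} → L^{q₀}(L^{p₀})} ≤ C₀ < ∞`, for `q₀ < q < ∞`,
`ρ_min(q) < p ≤ q`, and `r ≤ p` if `p < ρ_max(q)`, `r < ρ_max(q)` if `ρ_max(q) ≤ p`,
one has `‖Σ_j ‖𝒜_j f_j‖_{L^r(ℝ)}‖_{L^q(ℝ^d)} ≤ C(p,q)(1+C₀)(Σ_j 2^{-jd}‖f_j‖_p^q)^{1/q}`
for all sequences `{f_j}`. -/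
theorem multi_scale_sum_bound (d : ℕ) (hd : 2 ≤ d) (χ β₀ : ℝ → ℝ)
    (hχ : IsCutoff χ) (hβ : IsBump β₀)
    (p₀ q₀ : ℝ≥0∞) (hp₀1 : 1 < p₀) (hp₀q₀ : p₀ ≤ q₀) (hq₀ : q₀ ≠ ∞)
    (C₀ : ℝ≥0)
    (hC₀ : ∀ j : ℕ, (2 : ℝ≥0∞) ^ (((j : ℝ) * d) / q₀.toReal) *
      AjOpNorm d χ β₀ j p₀ q₀ p₀ ≤ C₀)
    (q p r ρmin ρmax : ℝ≥0∞) (hq1 : q₀ < q) (hq2 : q ≠ ∞)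
    (hρmin : ρmin⁻¹ = 1 - (q₀ / q) * (1 - p₀⁻¹))
    (hρmax : ρmax⁻¹ = (q₀ / q) * p₀⁻¹)
    (hp1 : ρmin < p) (hp2 : p ≤ q) (hr0 : 0 < r)
    (hr1 : p < ρmax → r ≤ p) (hr2 : ρmax ≤ p → r < ρmax) :
    ∃ C : ℝ≥0, ∀ F : ℕ → Euc d → ℂ,
      lqNorm q
          (fun x => ∑' j : ℕ,
            lqNorm r (fun t => (‖Aj d χ β₀ j (F j) x t‖₊ : ℝ≥0∞)) volume)
          volume ≤
        C * (1 + C₀) *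
          (∑' j : ℕ, (2 : ℝ≥0∞) ^ (-((j : ℝ) * d)) *
            eLpNorm (F j) p volume ^ q.toReal) ^ (1 / q.toReal) := by
  have hp₀ : p₀ ≠ ∞ := ne_top_of_le_ne_top hq₀ hp₀q₀
  have hp₀0 : p₀ ≠ 0 := (zero_lt_one.trans hp₀1).ne'
  have hq₀0 : q₀ ≠ 0 := ((zero_lt_one.trans hp₀1).trans_le hp₀q₀).ne'
  have hq0 : q ≠ 0 := (zero_le.trans_lt hq1).ne'
  have hp : p ≠ ∞ := ne_top_of_le_ne_top hq2 hp2
  have hp0 : p ≠ 0 := (zero_le.trans_lt hp1).ne'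
  have hr : r ≠ ∞ := by
    rcases lt_or_ge p ρmax with h | h
    · exact ne_top_of_le_ne_top hp (hr1 h)
    · exact (hr2 h).ne_top
  have rP0 : 1 < p₀.toReal := by
    have := (ENNReal.toReal_lt_toReal ENNReal.one_ne_top hp₀).2 hp₀1
    simpa using this
  have rPQ : p₀.toReal ≤ q₀.toReal := ENNReal.toReal_mono hq₀ hp₀q₀
  have rQQ : q₀.toReal < q.toReal := (ENNReal.toReal_lt_toReal hq₀ hq2).2 hq1
  have rpq : p.toReal ≤ q.toReal := ENNReal.toReal_mono hq2 hp2
  have rp : 0 < p.toReal := ENNReal.toReal_pos hp0 hp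
  have rr : 0 < r.toReal := ENNReal.toReal_pos hr0.ne' hr
  have rq : 0 < q.toReal := ENNReal.toReal_pos hq0 hq2
  have hqq1 : q₀ / q ≤ 1 := ENNReal.div_le_of_le_mul (by rw [one_mul]; exact hq1.le)
  have hp₀i : p₀⁻¹ ≤ 1 := ENNReal.inv_le_one.2 hp₀1.le
  have ea : ρmin⁻¹.toReal = 1 - q₀.toReal / q.toReal * (1 - 1 / p₀.toReal) := by
    rw [hρmin, ENNReal.toReal_sub_of_le (mul_le_one' hqq1 tsub_le_self) ENNReal.one_ne_top, ENNReal.toReal_mul,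
      ENNReal.toReal_div, ENNReal.toReal_sub_of_le hp₀i ENNReal.one_ne_top, ENNReal.toReal_inv]
    simp
  have eb : ρmax⁻¹.toReal = q₀.toReal / q.toReal * (1 / p₀.toReal) := by
    rw [hρmax, ENNReal.toReal_mul, ENNReal.toReal_div, ENNReal.toReal_inv]
    simp
  have ta : ρmin⁻¹ ≠ ∞ := by rw [hρmin]; exact ne_top_of_le_ne_top ENNReal.one_ne_top tsub_le_self
  have tb : ρmax⁻¹ ≠ ∞ := by
    rw [hρmax]; exact ne_top_of_le_ne_top ENNReal.one_ne_top (mul_le_one' hqq1 hp₀i)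
  set P₀ := p₀.toReal
  set Q₀ := q₀.toReal
  set P := p.toReal
  set Q := q.toReal
  set R := r.toReal
  set a := 1 - Q₀ / Q * (1 - 1 / P₀) with hadef
  set b := Q₀ / Q * (1 / P₀) with hbdef
  have hQ₀ : 0 < Q₀ := by linarith
  have hb0 : 0 < b := by positivity
  have hx1 : Q₀ / Q < 1 := (div_lt_one rq).2 rQQ
  have hba : b < a := by rw [hadef, hbdef]; linarith
  have ha1 : a ≤ 1 := by
    have h1 : 1 / P₀ ≤ 1 := by rw [div_le_one (by linarith)]; exact rP0.le
    have : 0 ≤ Q₀ / Q * (1 - 1 / P₀) := mul_nonneg (by positivity) (by linarith)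
    linarith
  have hpa : 1 / P < a := by
    rw [← ea, one_div, ← ENNReal.toReal_inv]
    exact (ENNReal.toReal_lt_toReal (ENNReal.inv_ne_top.2 hp0) ta).2 (ENNReal.inv_lt_inv.2 hp1)
  obtain ⟨s, hbs, hsa, hps, hsr⟩ : ∃ s, b < s ∧ s < a ∧ 1 / P ≤ s ∧ s ≤ 1 / R := by
    rcases lt_or_ge p ρmax with h | h
    · refine ⟨1 / P, ?_, hpa, le_rfl, ?_⟩
      · rw [← eb, one_div, ← ENNReal.toReal_inv]
        exact (ENNReal.toReal_lt_toReal tb (ENNReal.inv_ne_top.2 hp0)).2 (ENNReal.inv_lt_inv.2 h)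
      · exact one_div_le_one_div_of_le rr (ENNReal.toReal_mono hp (hr1 h))
    · have h1 : 1 / P ≤ b := by
        rw [← eb, one_div, ← ENNReal.toReal_inv]
        exact ENNReal.toReal_mono tb (ENNReal.inv_le_inv.2 h)
      have h2 : b < 1 / R := by
        rw [← eb, one_div, ← ENNReal.toReal_inv]
        exact (ENNReal.toReal_lt_toReal tb (ENNReal.inv_ne_top.2 hr0.ne')).2 (ENNReal.inv_lt_inv.2 (hr2 h))
      obtain ⟨s, h3, h4⟩ := exists_between (lt_min hba h2)
      exact ⟨s, h3, h4.trans_le (min_le_left _ _), h1.trans h3.le, (h4.trans_le (min_le_right _ _)).le⟩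
  have hs0 : 0 < s := hb0.trans hbs
  set ρ := 1 / s with hρdef
  have hρs : 1 / ρ = s := by rw [hρdef, one_div_one_div]
  have hρ1 : 1 ≤ ρ := by rw [hρdef, le_div_iff₀ hs0]; linarith
  have hρP : ρ ≤ P := by
    rw [hρdef, div_le_iff₀ hs0]
    rwa [div_le_iff₀' rp] at hps
  have hRρ : R ≤ ρ := by
    rw [hρdef, le_div_iff₀ hs0]
    rwa [le_div_iff₀' rr] at hsr
  have hdR : (0 : ℝ) < d := by norm_cast; omega
  obtain ⟨A, η, m, hη, hη1, hηI, hgood, hfar, hsup, hAj⟩ := ms_kernel hd hχ hβ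
  obtain ⟨K, hK⟩ := ms_stepB (μ := (volume : Measure (Euc d))) A ((C₀ + 1) ^ Q₀) P₀ Q₀ ρ Q d rP0 rPQ rQQ hdR
    (by rw [hρs]; exact hsa) (by rw [hρs]; exact hbs)
  have hB := hK m hgood (fun j g hg hgi => ms_hB p₀ q₀ hp₀1 hp₀q₀ hq₀ C₀ j (hC₀ j) (m j) (hAj j) g hg hgi)
  obtain ⟨K', hK'⟩ := ms_stepC (μ := (volume : Measure (Euc d))) A K η hη hη1 hηI ρ P Q d hρ1 hρP rpq hdR
  have hC := hK' m hgood hfar hsup hB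
  obtain ⟨H, hH⟩ := ms_holder_t rr hRρ
  refine ⟨H * K' ^ (1 / Q), fun F => ?_⟩
  have hrep : ∀ j, ∃ f : Euc d → ℂ, Measurable f ∧ Integrable f ∧ eLpNorm f p volume ≤ eLpNorm (F j) p volume ∧
      ∀ x t, Aj d χ β₀ j (F j) x t = msOp volume (m j) f x t := by
    intro j
    by_cases h : Integrable (F j)
    · have hae := h.1.ae_eq_mk
      refine ⟨h.1.mk (F j), h.1.stronglyMeasurable_mk.measurable, h.congr hae, (eLpNorm_congr_ae hae).ge,
        fun x t => ?_⟩
      rw [hAj j _ h]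
      unfold msOp
      refine integral_congr_ae ?_
      filter_upwards [hae] with w hw
      rw [hw]
    · refine ⟨0, measurable_zero, integrable_zero _ _ _, by simp, fun x t => ?_⟩
      rw [ms_Aj_junk j _ h]
      simp [msOp]
  choose f hfm hfi hfp hfA using hrep
  have h1 := hC f hfm hfi
  have hS : ∑' j : ℕ, (2 : ℝ≥0∞) ^ (-((j : ℝ) * d)) * ((∫⁻ w, ‖f j w‖ₑ ^ P) ^ (1 / P)) ^ Q ≤
      ∑' j : ℕ, (2 : ℝ≥0∞) ^ (-((j : ℝ) * d)) * eLpNorm (F j) p volume ^ Q := by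
    refine ENNReal.tsum_le_tsum fun j => ?_
    gcongr
    rw [← eLpNorm_eq_lintegral_rpow_enorm_toReal hp0 hp]
    exact hfp j
  set S := ∑' j : ℕ, (2 : ℝ≥0∞) ^ (-((j : ℝ) * d)) * eLpNorm (F j) p volume ^ Q
  have h2 := h1.trans (mul_le_mul_right hS _)
  unfold lqNorm
  simp only [hr, hq2, if_false]
  calc _ ≤ (∫⁻ x, (H * ∑' j, (∫⁻ t, ‖msOp volume (m j) (f j) x t‖ₑ ^ ρ) ^ (1 / ρ)) ^ Q) ^ (1 / Q) := by
        refine ENNReal.rpow_le_rpow (lintegral_mono fun x => ENNReal.rpow_le_rpow ?_ rq.le) (by positivity)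
        rw [← ENNReal.tsum_mul_left]
        refine ENNReal.tsum_le_tsum fun j => ?_
        simp only [hfA]
        refine hH (fun t => ‖msOp volume (m j) (f j) x t‖ₑ) ?_ fun t ht => ?_
        · exact (((hgood j).op_meas (hfm j)).comp (measurable_prodMk_left (x := x))).enorm
        · simp [msOp, hsup j x t _ ht]
    _ = H * (∫⁻ x, (∑' j, (∫⁻ t, ‖msOp volume (m j) (f j) x t‖ₑ ^ ρ) ^ (1 / ρ)) ^ Q) ^ (1 / Q) := by
        simp_rw [ENNReal.mul_rpow_of_nonneg _ _ rq.le]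
        rw [lintegral_const_mul' _ _ (ENNReal.rpow_ne_top_of_nonneg rq.le ENNReal.coe_ne_top),
          ENNReal.mul_rpow_of_nonneg _ _ (by positivity), ← ENNReal.rpow_mul, mul_one_div_cancel rq.ne',
          ENNReal.rpow_one]
    _ ≤ H * (K' * S) ^ (1 / Q) := by gcongr
    _ = (H * K' ^ (1 / Q) : ℝ≥0) * S ^ (1 / Q) := by
        rw [ENNReal.mul_rpow_of_nonneg _ _ (by positivity), ENNReal.coe_mul,
          ENNReal.coe_rpow_of_nonneg _ (by positivity), mul_assoc]
    _ ≤ _ := by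
        gcongr
        exact le_mul_of_one_le_right zero_le le_self_add
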